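/- The multivariable Askey–Wilson (q-Selberg) integral evaluation for the D_N weight: (1/(2^{N−1} N!)) ∮_{T^N} ∏_{1≤i<j≤N} ((x_i^{±1}x_j^{±1};q)_∞/(t x_i^{±1}x_j^{±1};q)_∞) ∏_j dx_j/(2πi x_j) · (q;q)_∞^N/(t;q)_∞^N = ((q t^{N−1};q)_∞/(t^N;q)_∞) · ∏_{j=0}^{N−2} (q t^{2j+1};q)_∞/(t^{2j+2};q)_∞. -/

import Mathlib

open MeasureTheory

/-- The infinite q-Pochhammer symbol `(a;q)_∞`. -/
noncomputable def ap (q a : ℂ) : ℂ := ∏' k : ℕ, (1 - a * q ^ k)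

/-- The ratio `(r;q)_∞ / (t r;q)_∞`. -/
noncomputable def pochRatio (q t r : ℂ) : ℂ := ap q r / ap q (t * r)

/-- The point of the unit torus with angles `θ`. -/
noncomputable def torusPt {N : ℕ} (θ : Fin N → ℝ) : Fin N → ℂ :=
  fun i => Complex.exp (θ i * Complex.I)

/-!
Writing `K(x; s)` for the integrand of Gustafson's `C_n` beta integral with parameters `s`, a
partial fraction identity expands the change of `K` under a shift `a ↦ q a` of one parameter into
terms that are antisymmetric under a `q`-shift of a single variable, hence integrate to zero.
Iterating the resulting `q`-difference equation down to parameters `0` evaluates the integral up to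
a constant `κ_n` depending only on `q` and `n`.

Specialising to the parameters `±√v, ±√(q v)` and `√t y_j^{±1}`, the product kernel can be
integrated in `x` or in `y`. Comparing the two orders expresses Macdonald's `C_{n+1}` constant term
at `(t, v)` through the one for `C_n` at `(t, t v)`. As `t = v → 1` the weight becomes trivial,
which gives `κ_n` and so a closed form in `v`; the limit `v → 1` removes the long roots and leaves
the `D_n` weight.
-/

open Filter Set Topology

section Pochhammer

variable {q : ℂ}

theorem summable_norm_neg_mul_pow (hq : ‖q‖ < 1) (a : ℂ) :
    Summable fun k : ℕ => ‖-(a * q ^ k)‖ := by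
  simpa [norm_mul, norm_pow] using
    (summable_geometric_of_lt_one (norm_nonneg q) hq).mul_left ‖a‖

theorem multipliable_ap (hq : ‖q‖ < 1) (a : ℂ) : Multipliable fun k : ℕ => 1 - a * q ^ k := by
  simpa [sub_eq_add_neg] using multipliable_one_add_of_summable (summable_norm_neg_mul_pow hq a)

@[simp]
theorem ap_zero (q : ℂ) : ap q 0 = 1 := by simp [ap]

theorem ap_eq_one_sub_mul (hq : ‖q‖ < 1) (a : ℂ) : ap q a = (1 - a) * ap q (q * a) := by
  have h : (fun k : ℕ => 1 - a * q ^ (k + 1)) = fun k => 1 - q * a * q ^ k := by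
    ext k; ring
  rw [ap, tprod_eq_zero_mul' (h ▸ multipliable_ap hq (q * a)), h, pow_zero, mul_one, ap]

theorem ap_ne_zero_of_forall_ne (hq : ‖q‖ < 1) {a : ℂ} (h : ∀ k : ℕ, a * q ^ k ≠ 1) :
    ap q a ≠ 0 := by
  simpa [ap, sub_eq_add_neg] using tprod_one_add_ne_zero_of_summable
    (fun k => by simpa [← sub_eq_add_neg] using sub_ne_zero.2 (h k).symm)
    (summable_norm_neg_mul_pow hq a)

theorem ap_ne_zero (hq : ‖q‖ < 1) {a : ℂ} (ha : ‖a‖ < 1) : ap q a ≠ 0 := by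
  refine ap_ne_zero_of_forall_ne hq fun k h => absurd (congrArg norm h) (ne_of_lt ?_)
  rw [norm_mul, norm_pow, norm_one]
  exact (mul_le_of_le_one_right (norm_nonneg a) (pow_le_one₀ (norm_nonneg q) hq.le)).trans_lt ha

theorem ap_mul_self_ne_zero (hq : ‖q‖ < 1) {a : ℂ} (ha : ‖a‖ ≤ 1) : ap q (q * a) ≠ 0 :=
  ap_ne_zero hq <| by
    rw [norm_mul]
    exact (mul_le_of_le_one_right (norm_nonneg q) ha).trans_lt hq

theorem ap_mul_ap_neg (hq : ‖q‖ < 1) (z : ℂ) : ap q z * ap q (-z) = ap (q ^ 2) (z ^ 2) := by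
  unfold ap
  rw [← (multipliable_ap hq z).tprod_mul (multipliable_ap hq (-z))]
  exact tprod_congr fun k => by ring

theorem ap_sq_mul_ap_sq (hq : ‖q‖ < 1) (a : ℂ) :
    ap (q ^ 2) a * ap (q ^ 2) (q * a) = ap q a := by
  have hq2 : ‖q ^ 2‖ < 1 := by
    rw [norm_pow]; exact pow_lt_one₀ (norm_nonneg _) hq two_ne_zero
  have hodd : (fun k : ℕ => 1 - q * a * (q ^ 2) ^ k) = fun k => 1 - a * q ^ (2 * k + 1) := by
    ext k; ring
  have heven : (fun k : ℕ => 1 - a * (q ^ 2) ^ k) = fun k => 1 - a * q ^ (2 * k) := by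
    ext k; ring
  have h := tprod_even_mul_odd (f := fun k => 1 - a * q ^ k) (heven ▸ multipliable_ap hq2 a)
    (hodd ▸ multipliable_ap hq2 (q * a))
  simpa only [ap, heven, hodd] using h

theorem ap_mul_ap_neg_mul_sqrt {σ : ℂ} (hq : ‖q‖ < 1) (hσ : σ ^ 2 = q) (z : ℂ) :
    ap q z * ap q (-z) * (ap q (σ * z) * ap q (-(σ * z))) = ap q (z ^ 2) := by
  rw [ap_mul_ap_neg hq, ap_mul_ap_neg hq, mul_pow, hσ, ap_sq_mul_ap_sq hq]

theorem hasProdLocallyUniformlyOn_ap :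
    HasProdLocallyUniformlyOn (fun (k : ℕ) (p : ℂ × ℂ) => 1 + -(p.2 * p.1 ^ k))
      (fun p => ap p.1 p.2) (Metric.ball (0 : ℂ) 1 ×ˢ univ) := by
  simp only [ap, sub_eq_add_neg]
  refine hasProdLocallyUniformlyOn_of_forall_compact (Metric.isOpen_ball.prod isOpen_univ)
    fun K hK hcK => ?_
  rcases K.eq_empty_or_nonempty with rfl | hne
  · simpa [hasProdUniformlyOn_iff_tendstoUniformlyOn] using tendstoUniformlyOn_empty
  obtain ⟨p₀, hp₀, hmax₀⟩ := hcK.exists_isMaxOn hne (f := fun p : ℂ × ℂ => ‖p.1‖) (by fun_prop)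
  obtain ⟨p₁, -, hmax₁⟩ := hcK.exists_isMaxOn hne (f := fun p : ℂ × ℂ => ‖p.2‖) (by fun_prop)
  have h₀ : ‖p₀.1‖ < 1 := by simpa using (hK hp₀).1
  refine Summable.hasProdUniformlyOn_nat_one_add hcK
    ((summable_geometric_of_lt_one (norm_nonneg p₀.1) h₀).mul_left ‖p₁.2‖)
    (Eventually.of_forall fun n p hp => ?_) (fun n => by fun_prop)
  rw [norm_neg, norm_mul, norm_pow]
  have hp₀ : ‖p.1‖ ≤ ‖p₀.1‖ := hmax₀ hp
  have hp₁ : ‖p.2‖ ≤ ‖p₁.2‖ := hmax₁ hp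
  gcongr

theorem continuousOn_ap :
    ContinuousOn (fun p : ℂ × ℂ => ap p.1 p.2) (Metric.ball (0 : ℂ) 1 ×ˢ univ) :=
  TendstoLocallyUniformlyOn.continuousOn hasProdLocallyUniformlyOn_ap
    (Frequently.of_forall fun s => by fun_prop)

theorem differentiable_ap (hq : ‖q‖ < 1) : Differentiable ℂ (ap q) := by
  have h := hasProdLocallyUniformlyOn_ap.comp (fun a : ℂ => (q, a)) (t := univ)
    (fun a _ => by simpa using hq) (by fun_prop)
  have := TendstoLocallyUniformlyOn.differentiableOn h
    (Eventually.of_forall fun s => by fun_prop) isOpen_univ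
  simpa [Function.comp_def, differentiableOn_univ] using! this

theorem continuous_ap (hq : ‖q‖ < 1) : Continuous (ap q) := (differentiable_ap hq).continuous

end Pochhammer

section PartialFractions

open Polynomial in
theorem sum_prod_sub_div_prod_sub_eq_one {K ι : Type*} [Field K] [Fintype ι] [DecidableEq ι]
    {v : ι → K} (hv : Function.Injective v) {s : Multiset K}
    (hs : s.card + 1 = Fintype.card ι) :
    ∑ i, (s.map fun b => v i - b).prod / ∏ j ∈ Finset.univ.erase i, (v i - v j) = 1 := by
  have hP : (s.map fun b => (X - C b : K[X])).prod.Monic := monic_multisetProd_X_sub_C s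
  have hdeg : (s.map fun b => (X - C b : K[X])).prod.degree = s.card := by
    rw [degree_eq_natDegree hP.ne_zero, natDegree_multiset_prod_X_sub_C_eq_card]
  have h := Lagrange.leadingCoeff_eq_sum (s := Finset.univ) hv.injOn
    (P := (s.map fun b => (X - C b : K[X])).prod)
    (by rw [hdeg, Finset.card_univ, ← hs]; push_cast; rfl)
  rw [hP.leadingCoeff] at h
  simpa [eval_multiset_prod] using h.symm

theorem prod_map_sub_eq_pow_mul {K : Type*} [Field K] (s : Multiset K) {z : K} (hz : z ≠ 0) :
    (s.map fun b => z - b).prod = z ^ s.card * (s.map fun b => 1 - b * z⁻¹).prod := by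
  induction s using Multiset.induction with
  | empty => simp
  | cons a s ih =>
    simp only [Multiset.map_cons, Multiset.prod_cons, Multiset.card_cons, ih]
    field_simp
    ring

theorem prod_map_sub_div_prod_sub {K ι : Type*} [Field K] {s : Multiset K} {u : Finset ι} {k : ℕ}
    (hs : s.card = u.card + k) (v : ι → K) {z : K} (hz : z ≠ 0) :
    (s.map fun b => z - b).prod / ∏ j ∈ u, (z - v j) =
      z ^ k * ((s.map fun b => 1 - b * z⁻¹).prod / ∏ j ∈ u, (1 - v j * z⁻¹)) := by
  have hu : ∏ j ∈ u, (z - v j) = z ^ u.card * ∏ j ∈ u, (1 - v j * z⁻¹) := by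
    rw [← Finset.prod_const, ← Finset.prod_mul_distrib]
    exact Finset.prod_congr rfl fun j _ => by field_simp
  rw [prod_map_sub_eq_pow_mul s hz, hu, hs, pow_add, mul_assoc,
    mul_div_mul_left _ _ (pow_ne_zero _ hz), mul_div_assoc]

theorem prod_erase_none {M ι : Type*} [CommMonoid M] [Fintype ι] [DecidableEq ι]
    (f : Option ι → M) : ∏ j ∈ Finset.univ.erase none, f j = ∏ i, f (some i) := by
  simp [← Finset.filter_ne', Finset.prod_filter, Fintype.prod_option]

theorem prod_erase_some {M ι : Type*} [CommMonoid M] [Fintype ι] [DecidableEq ι]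
    (f : Option ι → M) (i : ι) :
    ∏ j ∈ Finset.univ.erase (some i), f j = f none * ∏ j ∈ Finset.univ.erase i, f (some j) := by
  simp [← Finset.filter_ne', Finset.prod_filter, Fintype.prod_option]

theorem sum_prod_sub_div_prod_sub_insert_two {K ι : Type*} [Field K] [Fintype ι] [DecidableEq ι]
    {v : ι → K} (hv : Function.Injective v) {b c : K} (hvb : ∀ i, v i ≠ b) (hvc : ∀ i, v i ≠ c)
    (hcb : c ≠ b) {s : Multiset K} (hs : s.card = Fintype.card ι + 1) :
    (s.map fun d => b - d).prod / ((b - c) * ∏ i, (b - v i)) +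
      ((s.map fun d => c - d).prod / ((c - b) * ∏ i, (c - v i)) +
        ∑ i, (s.map fun d => v i - d).prod /
          ((v i - b) * ((v i - c) * ∏ j ∈ Finset.univ.erase i, (v i - v j)))) = 1 := by
  let w : Option (Option ι) → K := fun i => i.elim b fun i => i.elim c v
  have hw : Function.Injective w :=
    Option.injective_iff.2 ⟨Option.injective_iff.2 ⟨hv, by rintro ⟨i, h⟩; exact hvc i h⟩, by
      rintro ⟨_ | i, h⟩
      exacts [hcb h, hvb i h]⟩
  simpa only [Fintype.sum_option, prod_erase_none, prod_erase_some, Fintype.prod_option, w,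
    Option.elim] using
    sum_prod_sub_div_prod_sub_eq_one hw (s := s) (by simp [hs])

theorem prod_sub_div_prod_sub_node {K ι : Type*} [Field K] [Fintype ι] [DecidableEq ι]
    {v : ι → K} (hv0 : ∀ i, v i ≠ 0) {a : K} (ha0 : a ≠ 0) (ha : ∀ i, 1 - a * v i ≠ 0)
    {s : Multiset K} (hs : s.card = Fintype.card ι + 1) (i : ι) :
    (s.map fun b => v i - b).prod /
        ((v i - 0) * ((v i - a⁻¹) * ∏ j ∈ Finset.univ.erase i, (v i - v j))) =
      -(a * v i * (s.map fun b => 1 - b * (v i)⁻¹).prod *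
        ∏ j ∈ Finset.univ.erase i, (1 - a * v j) / (1 - v j * (v i)⁻¹)) /
        ∏ i, (1 - a * v i) := by
  have hcard : s.card = (Finset.univ.erase i).card + 2 := by
    rw [hs, ← Finset.card_univ, ← Finset.card_erase_add_one (Finset.mem_univ i)]
  have hsub : v i - a⁻¹ = -(1 - a * v i) / a := by field_simp; ring
  have hN : ∏ j ∈ Finset.univ.erase i, (1 - a * v j) ≠ 0 :=
    Finset.prod_ne_zero_iff.2 fun j _ => ha j
  rw [sub_zero, ← mul_assoc, div_mul_eq_div_div_swap, prod_map_sub_div_prod_sub hcard v (hv0 i),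
    hsub, Finset.prod_div_distrib, ← Finset.mul_prod_erase _ _ (Finset.mem_univ i)]
  generalize ∏ j ∈ Finset.univ.erase i, (1 - v j * (v i)⁻¹) = D
  generalize (s.map fun b => 1 - b * (v i)⁻¹).prod = A
  have := hv0 i
  have := ha i
  field_simp

theorem prod_one_sub_mul_eq_add_sum {K ι : Type*} [Field K] [Fintype ι] [DecidableEq ι]
    {v : ι → K} (hv : Function.Injective v) (hv0 : ∀ i, v i ≠ 0) {a : K}
    (ha : ∀ i, 1 - a * v i ≠ 0) {s : Multiset K} (hs : s.card = Fintype.card ι + 1) :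
    (s.map fun b => 1 - a * b).prod = (1 - a * (s.prod / ∏ i, v i)) * ∏ i, (1 - a * v i) +
      ∑ i, a * v i * (s.map fun b => 1 - b * (v i)⁻¹).prod *
        ∏ j ∈ Finset.univ.erase i, (1 - a * v j) / (1 - v j * (v i)⁻¹) := by
  rcases eq_or_ne a 0 with rfl | ha0
  · simp
  have hva (i) : v i ≠ a⁻¹ := fun h => ha i (by rw [h, mul_inv_cancel₀ ha0, sub_self])
  have key := sum_prod_sub_div_prod_sub_insert_two hv hv0 hva (inv_ne_zero ha0) hs
  have hzero : (s.map fun b => 0 - b).prod / ((0 - a⁻¹) * ∏ i, (0 - v i)) =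
      a * (s.prod / ∏ i, v i) := by
    have hprod : ∏ i, v i ≠ 0 := Finset.prod_ne_zero_iff.2 fun i _ => hv0 i
    simp only [zero_sub, Finset.prod_neg, Multiset.prod_map_neg, hs, Finset.card_univ]
    field_simp
    ring
  have hinv : (s.map fun b => a⁻¹ - b).prod / ((a⁻¹ - 0) * ∏ i, (a⁻¹ - v i)) =
      (s.map fun b => 1 - a * b).prod / ∏ i, (1 - a * v i) := by
    have h := prod_map_sub_div_prod_sub (u := Finset.univ) hs v (inv_ne_zero ha0)
    rw [sub_zero, div_mul_eq_div_div_swap, h, inv_inv, pow_one, mul_div_cancel_left₀ _ (by simpa)]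
    simp only [mul_comm _ a]
  have hprod : ∏ i, (1 - a * v i) ≠ 0 := Finset.prod_ne_zero_iff.2 fun i _ => ha i
  simp only [hzero, hinv, prod_sub_div_prod_sub_node hv0 ha0 ha hs, ← Finset.sum_div,
    Finset.sum_neg_distrib] at key
  generalize ∏ i, (1 - a * v i) = P at key hprod ⊢
  generalize (∑ i : ι, (_ : K)) = S at key ⊢
  generalize s.prod / _ = c at key ⊢
  field_simp at key
  linear_combination key

end PartialFractions

section RootProducts

variable {F M : Type*} [Field F]

/-- The product of `f` over the four characters `x^{±1} y^{±1}`. -/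
def signProd [CommMonoid M] (f : F → M) (x y : F) : M :=
  f (x * y) * f (x * y⁻¹) * f (x⁻¹ * y) * f ((x * y)⁻¹)

/-- The product of `f` over the short roots `x_i^{±1} x_j^{±1}` (`i < j`) of the root system
`C_n`, which are all the roots of `D_n`. -/
def shortRootProd [CommMonoid M] {n : ℕ} (f : F → M) (x : Fin n → F) : M :=
  ∏ i, ∏ j ∈ Finset.univ.filter (i < ·), signProd f (x i) (x j)

/-- The product of `f` over the long roots `x_i^{±2}` of the root system `C_n`. -/
def longRootProd [CommMonoid M] {n : ℕ} (f : F → M) (x : Fin n → F) : M :=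
  ∏ i, f (x i ^ 2) * f ((x i)⁻¹ ^ 2)

theorem signProd_comm [CommMonoid M] (f : F → M) (x y : F) : signProd f x y = signProd f y x := by
  rw [signProd, signProd, mul_comm y x, mul_comm y x⁻¹, mul_comm y⁻¹ x, mul_right_comm (f (x * y))]

theorem signProd_inv_left [CommMonoid M] (f : F → M) (x y : F) :
    signProd f x⁻¹ y = signProd f x y := by
  simp only [signProd, mul_inv, inv_inv]
  rw [mul_assoc, mul_comm, ← mul_assoc]

theorem signProd_div [DivisionCommMonoid M] (f g : F → M) (x y : F) :
    signProd (fun r => f r / g r) x y = signProd f x y / signProd g x y := by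
  simp only [signProd, mul_div_mul_comm]

theorem shortRootProd_div [DivisionCommMonoid M] {n : ℕ} (f g : F → M) (x : Fin n → F) :
    shortRootProd (fun r => f r / g r) x = shortRootProd f x / shortRootProd g x := by
  simp only [shortRootProd, signProd_div, Finset.prod_div_distrib]

theorem longRootProd_div [DivisionCommMonoid M] {n : ℕ} (f g : F → M) (x : Fin n → F) :
    longRootProd (fun r => f r / g r) x = longRootProd f x / longRootProd g x := by
  simp only [longRootProd, Finset.prod_div_distrib, ← mul_div_mul_comm]

theorem prod_prod_filter_lt_succAbove [CommMonoid M] {n : ℕ} (k : Fin (n + 1))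
    {g : Fin (n + 1) → Fin (n + 1) → M} (hg : ∀ i j, g i j = g j i) :
    ∏ i, ∏ j ∈ Finset.univ.filter (i < ·), g i j =
      (∏ j, g k (k.succAbove j)) *
        ∏ i, ∏ j ∈ Finset.univ.filter (i < ·), g (k.succAbove i) (k.succAbove j) := by
  have hk (j : Fin n) : (if k < k.succAbove j then g k (k.succAbove j) else 1) *
      (if k.succAbove j < k then g (k.succAbove j) k else 1) = g k (k.succAbove j) := by
    rcases lt_or_gt_of_ne (k.succAbove_ne j) with h | h <;> simp [h, h.not_gt, hg]
  simp only [Finset.prod_filter, Fin.prod_univ_succAbove _ k, lt_irrefl, if_false, one_mul,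
    Finset.prod_mul_distrib, ← mul_assoc, k.strictMono_succAbove.lt_iff_lt]
  rw [← Finset.prod_mul_distrib, Finset.prod_congr rfl fun j _ => hk j]

theorem shortRootProd_insertNth [CommMonoid M] {n : ℕ} (f : F → M) (k : Fin (n + 1)) (z : F)
    (y : Fin n → F) :
    shortRootProd f (k.insertNth z y : Fin (n + 1) → F) =
      (∏ j, signProd f z (y j)) * shortRootProd f y := by
  simp only [shortRootProd, prod_prod_filter_lt_succAbove k (fun _ _ => signProd_comm f _ _),
    Fin.insertNth_apply_same, Fin.insertNth_apply_succAbove]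

theorem shortRootProd_succ [CommMonoid M] {n : ℕ} (f : F → M) (x : Fin (n + 1) → F) :
    shortRootProd f x =
      (∏ j, signProd f (x 0) (x (Fin.succ j))) * shortRootProd f fun j => x (Fin.succ j) := by
  simpa only [shortRootProd, Fin.succAbove_zero] using
    prod_prod_filter_lt_succAbove 0 fun i j => signProd_comm f (x i) (x j)

theorem longRootProd_insertNth [CommMonoid M] {n : ℕ} (f : F → M) (k : Fin (n + 1)) (z : F)
    (y : Fin n → F) :
    longRootProd f (k.insertNth z y : Fin (n + 1) → F) =
      f (z ^ 2) * f (z⁻¹ ^ 2) * longRootProd f y := by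
  simp only [longRootProd, Fin.prod_univ_succAbove _ k, Fin.insertNth_apply_same,
    Fin.insertNth_apply_succAbove]

end RootProducts

section Parameters

variable {q : ℂ}

/-- The product of `(ab;q)_∞` over the pairs of parameters in `s`. -/
noncomputable def pairAp (q : ℂ) (s : Multiset ℂ) : ℂ :=
  ((s.powersetCard 2).map fun p => ap q p.prod).prod

/-- The product of `(b z^{±1};q)_∞` over the parameters `b` in `s`. -/
noncomputable def paramProd (q : ℂ) (s : Multiset ℂ) (z : ℂ) : ℂ :=
  (s.map fun b => ap q (b * z) * ap q (b * z⁻¹)).prod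

/-- The parameters `c y_j^{±1}`. -/
noncomputable def doubled {n : ℕ} (c : ℂ) (y : Fin n → ℂ) : Multiset ℂ :=
  ∑ j, {c * y j, c * (y j)⁻¹}

/-- The four parameters `±c, ±σc`; with `σ² = q` their contributions merge into long root
factors. -/
def fourParams (σ c : ℂ) : Multiset ℂ := {c, -c, σ * c, -(σ * c)}

theorem multiset_map_sum {α β ι : Type*} (f : α → β) (u : Finset ι) (s : ι → Multiset α) :
    (∑ i ∈ u, s i).map f = ∑ i ∈ u, (s i).map f :=
  map_sum (Multiset.mapAddMonoidHom f) s u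

@[simp]
theorem pairAp_zero (q : ℂ) : pairAp q 0 = 1 := by simp [pairAp, Multiset.powersetCard_zero_right]

theorem pairAp_cons (q a : ℂ) (s : Multiset ℂ) :
    pairAp q (a ::ₘ s) = (s.map fun b => ap q (a * b)).prod * pairAp q s := by
  simp [pairAp, Multiset.powersetCard_cons, Multiset.powersetCard_one, Multiset.map_map, mul_comm]

theorem pairAp_singleton (q a : ℂ) : pairAp q {a} = 1 := by
  simpa using pairAp_cons q a 0

theorem pairAp_zero_cons (q : ℂ) (s : Multiset ℂ) : pairAp q (0 ::ₘ s) = pairAp q s := by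
  simp [pairAp_cons]

@[simp]
theorem paramProd_zero (q z : ℂ) : paramProd q 0 z = 1 := by simp [paramProd]

theorem paramProd_cons (q a : ℂ) (s : Multiset ℂ) (z : ℂ) :
    paramProd q (a ::ₘ s) z = ap q (a * z) * ap q (a * z⁻¹) * paramProd q s z := by
  simp [paramProd]

theorem paramProd_zero_cons (q : ℂ) (s : Multiset ℂ) (z : ℂ) :
    paramProd q (0 ::ₘ s) z = paramProd q s z := by simp [paramProd_cons]

theorem paramProd_add (q : ℂ) (s u : Multiset ℂ) (z : ℂ) :
    paramProd q (s + u) z = paramProd q s z * paramProd q u z := by simp [paramProd]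

theorem paramProd_doubled (q c : ℂ) {n : ℕ} (y : Fin n → ℂ) (z : ℂ) :
    paramProd q (doubled c y) z = ∏ j, signProd (fun r => ap q (c * r)) (y j) z := by
  simp only [paramProd, doubled, multiset_map_sum, Multiset.prod_sum, signProd, mul_inv,
    Multiset.insert_eq_cons, Multiset.map_cons, Multiset.map_singleton, Multiset.prod_cons,
    Multiset.prod_singleton, mul_assoc]

theorem paramProd_fourParams {σ : ℂ} (hq : ‖q‖ < 1) (hσ : σ ^ 2 = q) (c z : ℂ) :
    paramProd q (fourParams σ c) z = ap q (c ^ 2 * z ^ 2) * ap q (c ^ 2 * z⁻¹ ^ 2) := by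
  rw [← mul_pow, ← mul_pow, ← ap_mul_ap_neg_mul_sqrt hq hσ, ← ap_mul_ap_neg_mul_sqrt hq hσ]
  simp [paramProd, fourParams, mul_assoc, mul_comm, mul_left_comm]

theorem card_doubled {n : ℕ} (c : ℂ) (y : Fin n → ℂ) : (doubled c y).card = 2 * n := by
  simp [doubled, mul_comm]

theorem prod_doubled {n : ℕ} (c : ℂ) {y : Fin n → ℂ} (hy : ∀ j, y j ≠ 0) :
    (doubled c y).prod = (c ^ 2) ^ n := by
  have h (j) : c * y j * (c * (y j)⁻¹) = c ^ 2 := by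
    have := hy j
    field_simp
  simp [doubled, Multiset.prod_sum, h]

theorem prod_fourParams {σ : ℂ} (hσ : σ ^ 2 = q) (c : ℂ) :
    (fourParams σ c).prod = q * (c ^ 2) ^ 2 := by
  simp only [fourParams, Multiset.insert_eq_cons, Multiset.prod_cons, Multiset.prod_singleton,
    ← hσ]
  ring

theorem doubled_succ {n : ℕ} (c : ℂ) (y : Fin (n + 1) → ℂ) :
    doubled c y = {c * y 0, c * (y 0)⁻¹} + doubled c fun j => y (Fin.succ j) := by
  simp [doubled, Fin.sum_univ_succ]

theorem map_mul_doubled {n : ℕ} (b c : ℂ) (y : Fin n → ℂ) :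
    (doubled c y).map (b * ·) = doubled (b * c) y := by
  simp [doubled, multiset_map_sum, mul_assoc]

theorem map_mul_fourParams (b σ c : ℂ) : (fourParams σ c).map (b * ·) = fourParams σ (b * c) := by
  simp [fourParams, mul_left_comm]

theorem pairAp_doubled_add (q c : ℂ) {n : ℕ} {y : Fin n → ℂ} (hy : ∀ j, y j ≠ 0)
    (s : Multiset ℂ) :
    pairAp q (doubled c y + s) = ap q (c ^ 2) ^ n * shortRootProd (fun r => ap q (c ^ 2 * r)) y *
      (∏ j, paramProd q (s.map (c * ·)) (y j)) * pairAp q s := by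
  induction n with
  | zero => simp [doubled, shortRootProd]
  | succ n ih =>
    have hs (z : ℂ) (w : Multiset ℂ) : (w.map fun b => ap q (c * z * b)).prod *
        (w.map fun b => ap q (c * z⁻¹ * b)).prod = paramProd q (w.map (c * ·)) z := by
      simp [paramProd, mul_right_comm]
    have h0 : c * y 0 * (c * (y 0)⁻¹) = c ^ 2 := by
      have := hy 0
      field_simp
    rw [doubled_succ, add_assoc, Multiset.insert_eq_cons, Multiset.cons_add, pairAp_cons,
      Multiset.singleton_add, Multiset.map_cons, Multiset.prod_cons, h0, pairAp_cons, mul_assoc,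
      ← mul_assoc (Multiset.prod _), hs, Multiset.map_add, map_mul_doubled, paramProd_add,
      paramProd_doubled, ih fun j => hy (Fin.succ j), shortRootProd_succ,
      Fin.prod_univ_succ (n := n), pow_succ (ap q _), ← sq c]
    simp only [signProd_comm _ (y 0)]
    ring

/-- The product `∏ (b b';q)_∞` over the pairs from the parameters `±√v, ±√(q v)`,
written without the cancelling factor `1 - v` so that it makes sense at `v = 1`. -/
noncomputable def fourPairAp (q v : ℂ) : ℂ := (1 + v) * (ap q (q * v ^ 2) / ap q (q * v)) ^ 2

theorem fourPairAp_ne_zero (hq : ‖q‖ < 1) {v : ℂ} (hv : ‖v‖ < 1) : fourPairAp q v ≠ 0 := by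
  have hv1 : 1 + v ≠ 0 := fun h => hv.ne (by
    rw [← neg_eq_of_add_eq_zero_right h, norm_neg, norm_one])
  exact mul_ne_zero hv1 (pow_ne_zero 2 (div_ne_zero
    (ap_mul_self_ne_zero hq (by simpa using hv.le))
    (ap_mul_self_ne_zero hq hv.le)))

theorem pairAp_fourParams {σ : ℂ} (hq : ‖q‖ < 1) (hσ : σ ^ 2 = q) {c : ℂ} (hc : ‖c‖ < 1) :
    pairAp q (fourParams σ c) = fourPairAp q (c ^ 2) := by
  have hv : ‖c ^ 2‖ < 1 := by rw [norm_pow]; exact pow_lt_one₀ (norm_nonneg c) hc two_ne_zero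
  have hpair : pairAp q (fourParams σ c) = ap q (-c ^ 2) * ap q (-(q * c ^ 2)) *
      (ap q (σ * c ^ 2) * ap q (-(σ * c ^ 2))) ^ 2 := by
    simp [fourParams, pairAp_cons, pairAp_singleton, ← hσ]
    ring_nf
  have hmid := ap_mul_ap_neg_mul_sqrt hq hσ (c ^ 2)
  have hne : ap q (q * c ^ 2) ≠ 0 := ap_mul_self_ne_zero hq hv.le
  have hne' : ap q (q * -c ^ 2) ≠ 0 := ap_mul_self_ne_zero hq (by rw [norm_neg]; exact hv.le)
  have h1 : 1 - c ^ 2 ≠ 0 := sub_ne_zero.2 fun h => by simp [← h] at hv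
  have h2 : 1 + c ^ 2 ≠ 0 := fun h => by simp [eq_neg_of_add_eq_zero_right h] at hv
  rw [ap_eq_one_sub_mul hq (-c ^ 2), ap_eq_one_sub_mul hq (c ^ 2),
    ap_eq_one_sub_mul hq ((c ^ 2) ^ 2), sub_neg_eq_add] at hmid
  have hE : ap q (σ * c ^ 2) * ap q (-(σ * c ^ 2)) =
      ap q (q * (c ^ 2) ^ 2) / (ap q (q * c ^ 2) * ap q (q * -c ^ 2)) := by
    rw [eq_div_iff (mul_ne_zero hne hne')]
    refine mul_left_cancel₀ (mul_ne_zero h1 h2) ?_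
    linear_combination hmid
  rw [hpair, hE, ap_eq_one_sub_mul hq (-c ^ 2), sub_neg_eq_add, ← mul_neg, fourPairAp]
  generalize ap q (q * -c ^ 2) = d at hne' ⊢
  field_simp

end Parameters

section Torus

/-- The point of the unit circle with angle `2πφ`, as a complex number. -/
noncomputable def circlePt (φ : UnitAddCircle) : ℂ := AddCircle.toCircle φ

/-- The point of the unit torus with angles `2πθ_i`. Unlike for `torusPt` the angles range over a
compact group of total mass one. -/
noncomputable def unitPt {n : ℕ} (θ : Fin n → UnitAddCircle) : Fin n → ℂ := fun i => circlePt (θ i)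

instance : IsProbabilityMeasure (volume : Measure UnitAddCircle) := ⟨UnitAddCircle.measure_univ⟩

@[simp]
theorem norm_circlePt (φ : UnitAddCircle) : ‖circlePt φ‖ = 1 := Circle.norm_coe _

@[simp]
theorem circlePt_ne_zero (φ : UnitAddCircle) : circlePt φ ≠ 0 := Circle.coe_ne_zero _

@[fun_prop]
theorem continuous_circlePt : Continuous circlePt :=
  continuous_subtype_val.comp AddCircle.continuous_toCircle

theorem circlePt_add (φ ψ : UnitAddCircle) : circlePt (φ + ψ) = circlePt φ * circlePt ψ := by
  simp [circlePt, AddCircle.toCircle_add]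

theorem circlePt_zero : circlePt 0 = 1 := by
  simp [circlePt, AddCircle.toCircle_zero]

theorem circlePt_neg (φ : UnitAddCircle) : circlePt (-φ) = (circlePt φ)⁻¹ := by
  simp [circlePt, AddCircle.toCircle_neg]

theorem circlePt_injective : Function.Injective circlePt :=
  Subtype.val_injective.comp (AddCircle.injective_toCircle one_ne_zero)

theorem circlePt_coe (t : ℝ) : circlePt t = Complex.exp (2 * Real.pi * t * Complex.I) := by
  simp [circlePt, AddCircle.toCircle_apply_mk, Circle.coe_exp]

theorem exists_circlePt_eq {z : ℂ} (hz : ‖z‖ = 1) : ∃ φ, circlePt φ = z := by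
  refine ⟨(z.arg / (2 * Real.pi) : ℝ), ?_⟩
  have h := Complex.norm_mul_exp_arg_mul_I z
  rw [hz, Complex.ofReal_one, one_mul] at h
  refine Eq.trans ?_ h
  rw [circlePt_coe]
  push_cast
  congr 1
  field_simp

@[simp]
theorem norm_unitPt {n : ℕ} (θ : Fin n → UnitAddCircle) (i : Fin n) : ‖unitPt θ i‖ = 1 :=
  norm_circlePt _

@[simp]
theorem unitPt_ne_zero {n : ℕ} (θ : Fin n → UnitAddCircle) (i : Fin n) : unitPt θ i ≠ 0 :=
  circlePt_ne_zero _

@[fun_prop]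
theorem continuous_unitPt {n : ℕ} : Continuous (unitPt (n := n)) := by
  unfold unitPt
  fun_prop

theorem unitPt_insertNth {n : ℕ} (k : Fin (n + 1)) (φ : UnitAddCircle)
    (θ : Fin n → UnitAddCircle) :
    unitPt (k.insertNth φ θ : Fin (n + 1) → UnitAddCircle) =
      (k.insertNth (circlePt φ) (unitPt θ) : Fin (n + 1) → ℂ) := by
  ext i
  induction i using Fin.succAboveCases k <;> simp [unitPt]

theorem integrable_of_continuous_of_compactSpace {X E : Type*} [MeasurableSpace X]
    [TopologicalSpace X] [OpensMeasurableSpace X] [CompactSpace X] [NormedAddCommGroup E]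
    {μ : Measure X} [IsFiniteMeasureOnCompacts μ] {f : X → E} (hf : Continuous f) :
    Integrable f μ :=
  hf.integrable_of_hasCompactSupport (HasCompactSupport.of_compactSpace f)

theorem integral_torus_insertNth {E : Type*} [NormedAddCommGroup E] [NormedSpace ℝ E] {n : ℕ}
    (k : Fin (n + 1)) {f : (Fin (n + 1) → UnitAddCircle) → E} (hf : Continuous f) :
    ∫ θ, f θ = ∫ θ, ∫ φ, f (k.insertNth φ θ : Fin (n + 1) → UnitAddCircle) := by
  have h := (volume_preserving_piFinSuccAbove (fun _ : Fin (n + 1) => UnitAddCircle) k).symm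
  have hi := (h.integrable_comp_emb (MeasurableEquiv.measurableEmbedding _)).2
    (integrable_of_continuous_of_compactSpace (μ := volume) hf)
  rw [← h.integral_comp']
  exact integral_prod_symm _ hi

instance : NullSingletonClass (volume : Measure UnitAddCircle) where
  measure_singleton φ := by
    rw [← Metric.closedBall_zero, AddCircle.volume_closedBall]
    simp

theorem ae_unitAddCircle_hom_ne_zero {n : ℕ} {g : (Fin n → UnitAddCircle) →+ UnitAddCircle}
    (hg : Continuous g) (hsurj : Function.Surjective g) : ∀ᵐ θ, g θ ≠ 0 :=
  (AddMonoidHom.measurePreserving (μ := volume) (ν := volume) hg hsurj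
    (by simp)).quasiMeasurePreserving.ae (Measure.ae_ne volume 0)

theorem ae_injective_unitPt (n : ℕ) :
    ∀ᵐ θ : Fin n → UnitAddCircle, Function.Injective (unitPt θ) := by
  let ev : Fin n → (Fin n → UnitAddCircle) →+ UnitAddCircle := Pi.evalAddMonoidHom _
  have hsub : ∀ᵐ θ : Fin n → UnitAddCircle, ∀ i j, i ≠ j → (ev i - ev j) θ ≠ 0 := by
    simp only [eventually_all]
    intro i j hij
    exact ae_unitAddCircle_hom_ne_zero ((continuous_apply i).sub (continuous_apply j))
      fun φ => ⟨Pi.single i φ, by simp [ev, hij.symm]⟩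
  filter_upwards [hsub] with θ hθ i j hij
  by_contra hne
  exact hθ i j hne (sub_eq_zero.2 (circlePt_injective hij))

theorem ae_unitPt_mul_unitPt_ne_one (n : ℕ) :
    ∀ᵐ θ : Fin n → UnitAddCircle, ∀ i j, unitPt θ i * unitPt θ j ≠ 1 := by
  let ev : Fin n → (Fin n → UnitAddCircle) →+ UnitAddCircle := Pi.evalAddMonoidHom _
  have hadd : ∀ᵐ θ : Fin n → UnitAddCircle, ∀ i j, (ev i + ev j) θ ≠ 0 := by
    simp only [eventually_all]
    intro i j
    refine ae_unitAddCircle_hom_ne_zero ((continuous_apply i).add (continuous_apply j))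
      fun φ => ⟨fun _ => DivisibleBy.div φ (2 : ℤ), ?_⟩
    simpa [ev, two_zsmul] using DivisibleBy.div_cancel φ (two_ne_zero (α := ℤ))
  filter_upwards [hadd] with θ hθ i j hij
  refine hθ i j (circlePt_injective ?_)
  simpa [ev, circlePt_add, circlePt_zero, unitPt] using hij

end Torus

section ConstantTerm

theorem circleAverage_eq_integral_circlePt (F : ℂ → ℂ) (R : ℝ) :
    Real.circleAverage F 0 R = ∫ φ, F (R * circlePt φ) := by
  have h := intervalIntegral.integral_comp_mul_left (a := 0) (b := 1)
    (fun t => F (circleMap 0 R t)) Real.two_pi_pos.ne'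
  rw [mul_zero, mul_one] at h
  rw [Real.circleAverage, ← h, ← UnitAddCircle.intervalIntegral_preimage 0, zero_add]
  simp [circlePt_coe, circleMap]

theorem integral_circlePt_mul (F : ℂ → ℂ) {u : ℂ} (hu : ‖u‖ = 1) :
    ∫ φ, F (u * circlePt φ) = ∫ φ, F (circlePt φ) := by
  obtain ⟨ψ, rfl⟩ := exists_circlePt_eq hu
  simp only [← circlePt_add]
  exact integral_add_left_eq_self (fun φ => F (circlePt φ)) ψ

theorem integral_circlePt_inv (F : ℂ → ℂ) :
    ∫ φ, F (circlePt φ)⁻¹ = ∫ φ, F (circlePt φ) := by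
  simp only [← circlePt_neg]
  exact integral_neg_eq_self (fun φ => F (circlePt φ)) volume

theorem integral_circlePt_eq_zero {q : ℂ} (hq0 : q ≠ 0) (hq : ‖q‖ < 1) {F : ℂ → ℂ}
    (hd : ∀ z, ‖q‖ ≤ ‖z‖ → ‖z‖ ≤ 1 → DifferentiableAt ℂ F z)
    (hs : ∀ z, ‖z‖ = 1 → F (q * z) = -F z⁻¹) :
    ∫ φ, F (circlePt φ) = 0 := by
  have hr : 0 < ‖q‖ := norm_pos_iff.2 hq0
  have hcauchy :=
    Complex.circleIntegral_sub_center_inv_smul_eq_of_differentiable_on_annulus_off_countable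
      (c := 0) (f := F) hr hq.le countable_empty
      (fun z hz => (hd z (by simpa using hz.2)
        (by simpa using hz.1)).continuousAt.continuousWithinAt)
      (fun z hz => hd z (by simpa using (not_le.1 (by simpa using hz.1.2)).le)
        (by simpa using (Metric.mem_ball.1 hz.1.1).le))
  have hradii : ∫ φ, F (circlePt φ) = ∫ φ, F (‖q‖ * circlePt φ) := by
    have h := congrArg ((2 * Real.pi * Complex.I : ℂ)⁻¹ • ·) hcauchy
    simp only [← Real.circleAverage_eq_circleIntegral one_ne_zero,
      ← Real.circleAverage_eq_circleIntegral hr.ne', circleAverage_eq_integral_circlePt] at h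
    simpa only [Complex.ofReal_one, one_mul] using h
  have hu : ‖q / ‖q‖‖ = 1 := by simp [hr.ne']
  have hqu : (‖q‖ : ℂ) * (q / ‖q‖) = q := mul_div_cancel₀ _ (by exact_mod_cast hr.ne')
  refine self_eq_neg.1 ?_
  calc ∫ φ, F (circlePt φ) = ∫ φ, F (‖q‖ * circlePt φ) := hradii
    _ = ∫ φ, F (‖q‖ * (q / ‖q‖ * circlePt φ)) :=
      (integral_circlePt_mul (fun z => F (‖q‖ * z)) hu).symm
    _ = ∫ φ, -F (circlePt φ)⁻¹ := by
      simp only [← mul_assoc, hqu, hs _ (norm_circlePt _)]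
    _ = -∫ φ, F (circlePt φ) := by rw [integral_neg, integral_circlePt_inv]

end ConstantTerm

section TypeC

variable {q : ℂ}

theorem continuous_signProd {X : Type*} [TopologicalSpace X] {f : ℂ → ℂ} (hf : Continuous f)
    {x y : X → ℂ} (hx : Continuous x) (hy : Continuous y) (hx0 : ∀ p, x p ≠ 0)
    (hy0 : ∀ p, y p ≠ 0) : Continuous fun p => signProd f (x p) (y p) := by
  unfold signProd
  fun_prop (disch := simp [*])

theorem continuous_shortRootProd {X : Type*} [TopologicalSpace X] {f : ℂ → ℂ} (hf : Continuous f)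
    {n : ℕ} {x : X → Fin n → ℂ} (hx : Continuous x) (hx0 : ∀ p i, x p i ≠ 0) :
    Continuous fun p => shortRootProd f (x p) :=
  continuous_finsetProd _ fun i _ => continuous_finsetProd _ fun j _ =>
    continuous_signProd hf (by fun_prop) (by fun_prop) (fun p => hx0 p i) (fun p => hx0 p j)

theorem continuous_longRootProd {X : Type*} [TopologicalSpace X] {f : ℂ → ℂ} (hf : Continuous f)
    {n : ℕ} {x : X → Fin n → ℂ} (hx : Continuous x) (hx0 : ∀ p i, x p i ≠ 0) :
    Continuous fun p => longRootProd f (x p) := by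
  unfold longRootProd
  fun_prop (disch := simp [*])

theorem paramProd_ne_zero (hq : ‖q‖ < 1) {s : Multiset ℂ} (hs : ∀ b ∈ s, ‖b‖ < 1) {z : ℂ}
    (hz : ‖z‖ = 1) : paramProd q s z ≠ 0 := by
  refine Multiset.prod_ne_zero fun h => ?_
  obtain ⟨b, hb, h⟩ := Multiset.mem_map.1 h
  exact mul_ne_zero (ap_ne_zero hq (by simpa [hz] using hs b hb))
    (ap_ne_zero hq (by simpa [hz] using hs b hb)) h

theorem continuous_paramProd (hq : ‖q‖ < 1) (s : Multiset ℂ) {X : Type*} [TopologicalSpace X]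
    {z : X → ℂ} (hz : Continuous z) (hz0 : ∀ p, z p ≠ 0) :
    Continuous fun p => paramProd q s (z p) := by
  have := continuous_ap hq
  exact continuous_multiset_prod _ fun b _ => by fun_prop (disch := simp [*])

/-- The integrand of Gustafson's `C_n` beta integral with parameters `s`. -/
noncomputable def gustafsonIntegrand (q : ℂ) (s : Multiset ℂ) {n : ℕ} (x : Fin n → ℂ) : ℂ :=
  shortRootProd (ap q) x * longRootProd (ap q) x / ∏ i, paramProd q s (x i)

/-- Gustafson's `C_n` beta integral over the torus of total mass one, without the factor
`(q;q)_∞^n / (2^n n!)`. -/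
noncomputable def gustafsonIntegral (q : ℂ) (n : ℕ) (s : Multiset ℂ) : ℂ :=
  ∫ θ : Fin n → UnitAddCircle, gustafsonIntegrand q s (unitPt θ)

theorem continuous_gustafsonIntegrand (hq : ‖q‖ < 1) {s : Multiset ℂ} (hs : ∀ b ∈ s, ‖b‖ < 1)
    {X : Type*} [TopologicalSpace X] {n : ℕ} {x : X → Fin n → ℂ} (hx : Continuous x)
    (hx1 : ∀ p i, ‖x p i‖ = 1) : Continuous fun p => gustafsonIntegrand q s (x p) := by
  have hx0 (p i) : x p i ≠ 0 := norm_ne_zero_iff.1 (by simp [hx1])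
  refine ((continuous_shortRootProd (continuous_ap hq) hx hx0).mul
    (continuous_longRootProd (continuous_ap hq) hx hx0)).div
    (continuous_finsetProd _ fun i _ => continuous_paramProd hq s (by fun_prop) fun p => hx0 p i)
    fun p => Finset.prod_ne_zero_iff.2 fun i _ => paramProd_ne_zero hq hs (hx1 p i)

theorem gustafsonIntegrand_insertNth (s : Multiset ℂ) {n : ℕ} (k : Fin (n + 1)) (z : ℂ)
    (y : Fin n → ℂ) :
    gustafsonIntegrand q s (k.insertNth z y : Fin (n + 1) → ℂ) =
      (∏ j, signProd (ap q) z (y j)) * (ap q (z ^ 2) * ap q (z⁻¹ ^ 2)) / paramProd q s z *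
        gustafsonIntegrand q s y := by
  simp only [gustafsonIntegrand, shortRootProd_insertNth, longRootProd_insertNth,
    Fin.prod_univ_succAbove _ k, Fin.insertNth_apply_same, Fin.insertNth_apply_succAbove]
  rw [div_mul_div_comm]
  ring

theorem paramProd_inv (s : Multiset ℂ) (z : ℂ) : paramProd q s z⁻¹ = paramProd q s z := by
  simp [paramProd, mul_comm]

theorem gustafsonIntegrand_insertNth_inv (s : Multiset ℂ) {n : ℕ} (k : Fin (n + 1)) (z : ℂ)
    (y : Fin n → ℂ) :
    gustafsonIntegrand q s (k.insertNth z⁻¹ y : Fin (n + 1) → ℂ) =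
      gustafsonIntegrand q s (k.insertNth z y : Fin (n + 1) → ℂ) := by
  simp only [gustafsonIntegrand_insertNth, signProd_inv_left, paramProd_inv, inv_inv,
    mul_comm (ap q (z⁻¹ ^ 2))]

theorem paramProd_cons_eq_mul (hq : ‖q‖ < 1) (a : ℂ) (s : Multiset ℂ) (z : ℂ) :
    paramProd q (a ::ₘ s) z =
      (1 - a * z) * (1 - a * z⁻¹) * paramProd q ((q * a) ::ₘ s) z := by
  rw [paramProd_cons, paramProd_cons, ap_eq_one_sub_mul hq (a * z),
    ap_eq_one_sub_mul hq (a * z⁻¹)]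
  ring_nf

theorem gustafsonIntegrand_cons_mul_prod (hq : ‖q‖ < 1) {a : ℂ} (s : Multiset ℂ) {n : ℕ}
    {x : Fin n → ℂ} (hax : ∀ i, (1 - a * x i) * (1 - a * (x i)⁻¹) ≠ 0) :
    gustafsonIntegrand q (a ::ₘ s) x * ∏ i, (1 - a * x i) * (1 - a * (x i)⁻¹) =
      gustafsonIntegrand q ((q * a) ::ₘ s) x := by
  have hne : ∏ i, (1 - a * x i) * (1 - a * (x i)⁻¹) ≠ 0 :=
    Finset.prod_ne_zero_iff.2 fun i _ => hax i
  have hparam : ∏ i, paramProd q (a ::ₘ s) (x i) = (∏ i, (1 - a * x i) * (1 - a * (x i)⁻¹)) *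
      ∏ i, paramProd q ((q * a) ::ₘ s) (x i) := by
    rw [← Finset.prod_mul_distrib]
    exact Finset.prod_congr rfl fun i _ => paramProd_cons_eq_mul hq a s (x i)
  rw [gustafsonIntegrand, gustafsonIntegrand, hparam, div_mul_eq_mul_div, mul_comm,
    mul_div_mul_left _ _ hne]

end TypeC

section PartialFractionsInv

variable {K : Type*} [Field K]

/-- The contribution of the pole `z` to the partial fraction expansion of `∏ (1 - a b)` with
respect to the nodes `z^{±1}`, `y_j^{±1}`. -/
def partialFractionTerm (s : Multiset K) {n : ℕ} (a z : K) (y : Fin n → K) : K :=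
  z * (s.map fun b => 1 - b * z⁻¹).prod * ((1 - a * z⁻¹) / (1 - z⁻¹ ^ 2)) *
    ∏ j, (1 - a * y j) * (1 - a * (y j)⁻¹) / ((1 - y j * z⁻¹) * (1 - (y j)⁻¹ * z⁻¹))

theorem prod_erase_eq_prod_succAbove {M : Type*} [CommMonoid M] {n : ℕ} (k : Fin (n + 1))
    (f : Fin (n + 1) → M) : ∏ i ∈ Finset.univ.erase k, f i = ∏ j, f (k.succAbove j) := by
  rw [← Finset.compl_singleton, ← Fin.image_succAbove_univ,
    Finset.prod_image Fin.succAbove_right_injective.injOn]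

theorem prod_erase_inl {M ι κ : Type*} [CommMonoid M] [Fintype ι] [Fintype κ] [DecidableEq ι]
    [DecidableEq κ] (i : ι) (f : ι ⊕ κ → M) :
    ∏ j ∈ Finset.univ.erase (Sum.inl i), f j =
      (∏ j ∈ Finset.univ.erase i, f (Sum.inl j)) * ∏ j, f (Sum.inr j) := by
  simp [← Finset.filter_ne', Finset.prod_filter, Fintype.prod_sum_type]

theorem prod_erase_inr {M ι κ : Type*} [CommMonoid M] [Fintype ι] [Fintype κ] [DecidableEq ι]
    [DecidableEq κ] (i : κ) (f : ι ⊕ κ → M) :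
    ∏ j ∈ Finset.univ.erase (Sum.inr i), f j =
      (∏ j, f (Sum.inl j)) * ∏ j ∈ Finset.univ.erase i, f (Sum.inr j) := by
  simp [← Finset.filter_ne', Finset.prod_filter, Fintype.prod_sum_type]

theorem injective_sumElim_inv {ι : Type*} {x : ι → K} (hx0 : ∀ i, x i ≠ 0)
    (hx : Function.Injective x) (hxx : ∀ i j, x i * x j ≠ 1) :
    Function.Injective (Sum.elim x x⁻¹) :=
  hx.sumElim (inv_injective.comp hx) fun i j h => hxx i j (by
    rw [h, Pi.inv_apply, inv_mul_cancel₀ (hx0 j)])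

theorem prod_one_sub_mul_eq_add_sum_inv {n : ℕ} {x : Fin (n + 1) → K} (hx0 : ∀ i, x i ≠ 0)
    (hx : Function.Injective x) (hxx : ∀ i j, x i * x j ≠ 1) {a : K}
    (ha : ∀ i, (1 - a * x i) * (1 - a * (x i)⁻¹) ≠ 0) {s : Multiset K}
    (hs : s.card = 2 * n + 3) :
    (s.map fun b => 1 - a * b).prod =
      (1 - a * s.prod) * ∏ i, (1 - a * x i) * (1 - a * (x i)⁻¹) +
        a * ∑ i, (partialFractionTerm s a (x i) (i.removeNth x) +
          partialFractionTerm s a (x i)⁻¹ (i.removeNth x)) := by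
  have hprod : ∏ i, Sum.elim x x⁻¹ i = 1 := by
    simp [Fintype.prod_sum_type, mul_inv_cancel₀ (Finset.prod_ne_zero_iff.2 fun i _ => hx0 i)]
  rw [prod_one_sub_mul_eq_add_sum (injective_sumElim_inv hx0 hx hxx)
    (Sum.rec hx0 fun i => inv_ne_zero (hx0 i))
    (Sum.rec (fun i => left_ne_zero_of_mul (ha i)) fun i => right_ne_zero_of_mul (ha i))
    (by simp [hs]; ring), hprod, div_one]
  congr 1
  · simp [Fintype.prod_sum_type, Finset.prod_mul_distrib]
  · simp only [Fintype.sum_sum_type, Finset.mul_sum, ← Finset.sum_add_distrib, mul_add]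
    refine Finset.sum_congr rfl fun i _ => congrArg₂ (· + ·) ?_ ?_
    · rw [prod_erase_inl, prod_erase_eq_prod_succAbove, Fin.prod_univ_succAbove _ i,
        mul_left_comm (∏ j, _), ← Finset.prod_mul_distrib]
      simp [partialFractionTerm, Fin.removeNth, mul_assoc, div_mul_div_comm, sq]
    · rw [prod_erase_inr, prod_erase_eq_prod_succAbove, Fin.prod_univ_succAbove _ i,
        mul_assoc (_ / _), ← Finset.prod_mul_distrib]
      simp [partialFractionTerm, Fin.removeNth, mul_assoc, div_mul_div_comm, sq]

end PartialFractionsInv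

section QShift

variable {q : ℂ}

/-- The theta function `(c z, q c / z; q)_∞`, up to normalisation and a shift of the argument. -/
noncomputable def qTheta (q c z : ℂ) : ℂ := ap q (c * z) * ap q (q * c * z⁻¹)

/-- The factor by which the type `C_n` integrand changes when the variable `z` is removed through
the pole at a node of the partial fraction expansion. -/
noncomputable def residueKernel (q : ℂ) (s : Multiset ℂ) {n : ℕ} (z : ℂ) (y : Fin n → ℂ) : ℂ :=
  z * (ap q (z ^ 2) * ap q (q * z⁻¹ ^ 2)) * (∏ j, qTheta q (y j) z * qTheta q (y j)⁻¹ z) /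
    (s.map fun b => qTheta q b z).prod

theorem qTheta_q_mul (hq0 : q ≠ 0) (c z : ℂ) : qTheta q c (q * z) = qTheta q c z⁻¹ := by
  have h : q * c * (q * z)⁻¹ = c * z⁻¹ := by
    rw [mul_inv]
    field_simp
  rw [qTheta, qTheta, h, inv_inv, mul_comm, mul_left_comm c, mul_assoc]

theorem residueKernel_q_mul (hq0 : q ≠ 0) (hq : ‖q‖ < 1) (s : Multiset ℂ) {n : ℕ} {z : ℂ}
    (hz : z ≠ 0) (y : Fin n → ℂ) :
    residueKernel q s (q * z) y = -residueKernel q s z⁻¹ y := by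
  have h : q * z * (ap q ((q * z) ^ 2) * ap q (q * (q * z)⁻¹ ^ 2)) =
      -(z⁻¹ * (ap q (z⁻¹ ^ 2) * ap q (q * z⁻¹⁻¹ ^ 2))) := by
    have h₁ : q * (q * (q * z)⁻¹ ^ 2) = z⁻¹ ^ 2 := by field_simp
    have h₂ : q * (q * z⁻¹⁻¹ ^ 2) = (q * z) ^ 2 := by rw [inv_inv]; ring
    rw [ap_eq_one_sub_mul hq (q * (q * z)⁻¹ ^ 2), ap_eq_one_sub_mul hq (q * z⁻¹⁻¹ ^ 2), h₁, h₂]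
    field_simp
    ring
  simp only [residueKernel, qTheta_q_mul hq0, h, neg_mul, neg_div]

theorem qTheta_ne_zero (hq : ‖q‖ < 1) {c z : ℂ} (hc : ‖c‖ < 1) (hqz : ‖q‖ ≤ ‖z‖)
    (hz1 : ‖z‖ ≤ 1) (hz0 : z ≠ 0) : qTheta q c z ≠ 0 := by
  refine mul_ne_zero (ap_ne_zero hq ?_) (ap_ne_zero hq ?_)
  · rw [norm_mul]
    exact (mul_le_of_le_one_right (norm_nonneg c) hz1).trans_lt hc
  · rw [norm_mul, norm_mul, norm_inv, mul_right_comm, ← div_eq_mul_inv]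
    exact (mul_le_of_le_one_left (norm_nonneg c)
      ((div_le_one (norm_pos_iff.2 hz0)).2 hqz)).trans_lt hc

theorem prod_qTheta_ne_zero (hq : ‖q‖ < 1) {s : Multiset ℂ} (hs : ∀ b ∈ s, ‖b‖ < 1) {z : ℂ}
    (hqz : ‖q‖ ≤ ‖z‖) (hz1 : ‖z‖ ≤ 1) (hz0 : z ≠ 0) :
    (s.map fun b => qTheta q b z).prod ≠ 0 :=
  Multiset.prod_ne_zero fun h => by
    obtain ⟨b, hb, h⟩ := Multiset.mem_map.1 h
    exact qTheta_ne_zero hq (hs b hb) hqz hz1 hz0 h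

theorem integral_residueKernel_circlePt (hq0 : q ≠ 0) (hq : ‖q‖ < 1) {s : Multiset ℂ}
    (hs : ∀ b ∈ s, ‖b‖ < 1) {n : ℕ} (y : Fin n → ℂ) :
    ∫ φ, residueKernel q s (circlePt φ) y = 0 := by
  refine integral_circlePt_eq_zero (F := fun z => residueKernel q s z y) hq0 hq
    (fun z hqz hz1 => ?_)
    fun z hz => residueKernel_q_mul hq0 hq s (norm_ne_zero_iff.1 (by simp [hz])) y
  have hz0 : z ≠ 0 := norm_pos_iff.1 ((norm_pos_iff.2 hq0).trans_le hqz)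
  have hap := differentiable_ap hq
  have htheta (c : ℂ) : DifferentiableAt ℂ (fun z => qTheta q c z) z := by
    unfold qTheta
    fun_prop (disch := exact hz0)
  unfold residueKernel
  refine DifferentiableAt.div ?_ ?_ (prod_qTheta_ne_zero hq hs hqz hz1 hz0)
  · fun_prop (disch := exact hz0)
  · exact (HasFDerivAt.multiset_prod fun b _ => (htheta b).hasFDerivAt).differentiableAt

theorem continuous_residueKernel (hq : ‖q‖ < 1) {s : Multiset ℂ}
    (hs : ∀ b ∈ s, ‖b‖ < 1) {X : Type*} [TopologicalSpace X] {n : ℕ} {z : X → ℂ}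
    {y : X → Fin n → ℂ} (hz : Continuous z) (hy : Continuous y) (hz1 : ∀ p, ‖z p‖ = 1)
    (hy0 : ∀ p j, y p j ≠ 0) :
    Continuous fun p => residueKernel q s (z p) (y p) := by
  have hz0 (p) : z p ≠ 0 := norm_ne_zero_iff.1 (by simp [hz1])
  have hap := continuous_ap hq
  refine Continuous.div ?_ (continuous_multiset_prod _ fun b _ => ?_) fun p =>
    prod_qTheta_ne_zero hq hs ((hz1 p).symm ▸ hq.le) (hz1 p).le (hz0 p)
  all_goals
    unfold qTheta
    fun_prop (disch := simp [*])

theorem paramProd_eq_mul_qTheta (hq : ‖q‖ < 1) (s : Multiset ℂ) (z : ℂ) :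
    paramProd q s z = (s.map fun b => 1 - b * z⁻¹).prod * (s.map fun b => qTheta q b z).prod := by
  rw [paramProd, ← Multiset.prod_map_mul]
  congr 1
  refine Multiset.map_congr rfl fun b _ => ?_
  rw [ap_eq_one_sub_mul hq (b * z⁻¹), qTheta]
  ring_nf

theorem signProd_ap_eq_mul_qTheta (hq : ‖q‖ < 1) (y z : ℂ) :
    signProd (ap q) z y =
      (1 - y * z⁻¹) * (1 - y⁻¹ * z⁻¹) * (qTheta q y z * qTheta q y⁻¹ z) := by
  rw [signProd, ap_eq_one_sub_mul hq (z⁻¹ * y), ap_eq_one_sub_mul hq (z * y)⁻¹, mul_inv,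
    qTheta, qTheta]
  ring_nf

theorem prod_one_sub_ne_zero {s : Multiset ℂ} (hs : ∀ b ∈ s, ‖b‖ < 1) {w : ℂ} (hw : ‖w‖ ≤ 1) :
    (s.map fun b => 1 - b * w).prod ≠ 0 :=
  Multiset.prod_ne_zero fun h => by
    obtain ⟨b, hb, h⟩ := Multiset.mem_map.1 h
    have hbw : ‖b * w‖ < 1 := by
      rw [norm_mul]
      exact (mul_le_of_le_one_right (norm_nonneg b) hw).trans_lt (hs b hb)
    exact hbw.ne (by rw [← sub_eq_zero.1 h, norm_one])

theorem gustafsonIntegrand_mul_partialFractionTerm (hq : ‖q‖ < 1) {a : ℂ} {s : Multiset ℂ}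
    (hs : ∀ b ∈ a ::ₘ s, ‖b‖ < 1) {n : ℕ} (k : Fin (n + 1)) {z : ℂ} {y : Fin n → ℂ}
    (hz : ‖z‖ = 1) (hzz : z * z ≠ 1) (hyz : ∀ j, y j ≠ z)
    (hyz' : ∀ j, y j * z ≠ 1) (hay : ∀ j, (1 - a * y j) * (1 - a * (y j)⁻¹) ≠ 0) :
    gustafsonIntegrand q (a ::ₘ s) (k.insertNth z y : Fin (n + 1) → ℂ) *
        partialFractionTerm s a z y =
      residueKernel q (a ::ₘ s) z y * gustafsonIntegrand q ((q * a) ::ₘ s) y := by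
  have hz0 : z ≠ 0 := norm_ne_zero_iff.1 (by simp [hz])
  have hD : ∏ j, (1 - y j * z⁻¹) * (1 - (y j)⁻¹ * z⁻¹) ≠ 0 :=
    Finset.prod_ne_zero_iff.2 fun j _ => mul_ne_zero
      (sub_ne_zero.2 fun h => hyz j (eq_of_mul_inv_eq_one h.symm))
      (sub_ne_zero.2 fun h => hyz' j (by rw [← inv_inj, mul_inv, inv_one, ← h]))
  have hz2 : 1 - z⁻¹ ^ 2 ≠ 0 :=
    sub_ne_zero.2 fun h => hzz (by rw [← inv_inj, mul_inv, inv_one, ← sq, ← h])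
  have hB := prod_one_sub_ne_zero hs (w := z⁻¹) (by simp [hz])
  have hΘ := prod_qTheta_ne_zero hq hs (hz.symm ▸ hq.le) hz.le hz0
  rw [gustafsonIntegrand_insertNth, ← gustafsonIntegrand_cons_mul_prod hq s hay,
    paramProd_eq_mul_qTheta hq, ap_eq_one_sub_mul hq (z⁻¹ ^ 2), partialFractionTerm,
    residueKernel, Finset.prod_div_distrib,
    Finset.prod_congr rfl fun j _ => signProd_ap_eq_mul_qTheta hq (y j) z,
    Finset.prod_mul_distrib]
  rw [Multiset.map_cons, Multiset.prod_cons] at hB ⊢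
  have ha := left_ne_zero_of_mul hB
  have hs' := right_ne_zero_of_mul hB
  generalize ∏ j, (1 - y j * z⁻¹) * (1 - (y j)⁻¹ * z⁻¹) = D at *
  generalize (s.map fun b => 1 - b * z⁻¹).prod = B at *
  generalize 1 - a * z⁻¹ = A at *
  generalize 1 - z⁻¹ ^ 2 = E at *
  generalize ∏ j, (1 - a * y j) * (1 - a * (y j)⁻¹) = C
  generalize ((a ::ₘ s).map fun b => qTheta q b z).prod = Θ at *
  field_simp

/-- The residue contributions at the two nodes `x_k^{±1}`, with the remaining variables left in
the integrand. -/
noncomputable def boundaryTerm (q a : ℂ) (s : Multiset ℂ) {n : ℕ} (k : Fin (n + 1))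
    (x : Fin (n + 1) → ℂ) : ℂ :=
  (residueKernel q (a ::ₘ s) (x k) (k.removeNth x) +
      residueKernel q (a ::ₘ s) (x k)⁻¹ (k.removeNth x)) *
    gustafsonIntegrand q ((q * a) ::ₘ s) (k.removeNth x)

theorem gustafsonIntegrand_mul_prod_one_sub (hq : ‖q‖ < 1) {a : ℂ} {s : Multiset ℂ}
    (hs : ∀ b ∈ a ::ₘ s, ‖b‖ < 1) {n : ℕ} (hcard : s.card = 2 * n + 3) {x : Fin (n + 1) → ℂ}
    (hx1 : ∀ i, ‖x i‖ = 1) (hx : Function.Injective x) (hxx : ∀ i j, x i * x j ≠ 1) :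
    gustafsonIntegrand q (a ::ₘ s) x * (s.map fun b => 1 - a * b).prod =
      (1 - a * s.prod) * gustafsonIntegrand q ((q * a) ::ₘ s) x +
        a * ∑ k, boundaryTerm q a s k x := by
  have hx0 (i) : x i ≠ 0 := norm_ne_zero_iff.1 (by simp [hx1])
  have hax (i) : (1 - a * x i) * (1 - a * (x i)⁻¹) ≠ 0 := by
    have h {w : ℂ} (hw : ‖w‖ = 1) : 1 - a * w ≠ 0 := by
      simpa using prod_one_sub_ne_zero (s := {a}) (w := w) (by simpa using hs a) hw.le
    exact mul_ne_zero (h (hx1 i)) (h (by simp [hx1]))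
  rw [prod_one_sub_mul_eq_add_sum_inv hx0 hx hxx hax hcard, mul_add, mul_left_comm,
    gustafsonIntegrand_cons_mul_prod hq s hax, mul_left_comm _ a, Finset.mul_sum]
  congr 2
  refine Finset.sum_congr rfl fun k _ => ?_
  have hself := gustafsonIntegrand_mul_partialFractionTerm hq hs k (z := x k)
    (y := k.removeNth x) (hx1 k) (hxx k k)
    (fun j h => Fin.succAbove_ne k j (hx h)) (fun j => hxx _ _) fun j => hax _
  have hinv := gustafsonIntegrand_mul_partialFractionTerm hq hs k (z := (x k)⁻¹)
    (y := k.removeNth x) (by simp [hx1]) (by rw [← mul_inv, inv_ne_one]; exact hxx k k)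
    (fun j h => hxx _ _ ((mul_eq_one_iff_eq_inv₀ (hx0 k)).2 h))
    (fun j h => Fin.succAbove_ne k j (hx (eq_of_mul_inv_eq_one h))) fun j => hax _
  rw [gustafsonIntegrand_insertNth_inv] at hinv
  rw [Fin.insertNth_self_removeNth] at hself hinv
  rw [mul_add, hself, hinv, boundaryTerm, add_mul]

end QShift

section TypeCIntegral

variable {q : ℂ}

theorem norm_lt_one_of_mem_q_mul_cons (hq : ‖q‖ < 1) {a : ℂ} {s : Multiset ℂ}
    (hs : ∀ b ∈ a ::ₘ s, ‖b‖ < 1) : ∀ b ∈ (q * a) ::ₘ s, ‖b‖ < 1 := by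
  rw [Multiset.forall_mem_cons] at hs ⊢
  refine ⟨?_, hs.2⟩
  rw [norm_mul]
  exact (mul_le_of_le_one_left (norm_nonneg a) hq.le).trans_lt hs.1

theorem continuous_boundaryTerm (hq : ‖q‖ < 1) {a : ℂ} {s : Multiset ℂ}
    (hs : ∀ b ∈ a ::ₘ s, ‖b‖ < 1) {n : ℕ} (k : Fin (n + 1)) :
    Continuous fun θ : Fin (n + 1) → UnitAddCircle => boundaryTerm q a s k (unitPt θ) := by
  have hk : Continuous fun θ : Fin (n + 1) → UnitAddCircle => unitPt θ k := by fun_prop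
  have hrem : Continuous fun θ : Fin (n + 1) → UnitAddCircle => k.removeNth (unitPt θ) :=
    continuous_pi fun j => by unfold Fin.removeNth; fun_prop
  have hne (θ : Fin (n + 1) → UnitAddCircle) (j : Fin n) : k.removeNth (unitPt θ) j ≠ 0 :=
    unitPt_ne_zero θ _
  exact ((continuous_residueKernel hq hs hk hrem (by simp) hne).add
    (continuous_residueKernel hq hs (hk.inv₀ (by simp)) hrem (by simp) hne)).mul
    (continuous_gustafsonIntegrand hq (norm_lt_one_of_mem_q_mul_cons hq hs) hrem
      fun θ j => norm_unitPt θ _)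

theorem integral_boundaryTerm (hq0 : q ≠ 0) (hq : ‖q‖ < 1) {a : ℂ} {s : Multiset ℂ}
    (hs : ∀ b ∈ a ::ₘ s, ‖b‖ < 1) {n : ℕ} (k : Fin (n + 1)) :
    ∫ θ, boundaryTerm q a s k (unitPt θ) = 0 := by
  rw [integral_torus_insertNth k (continuous_boundaryTerm hq hs k)]
  refine integral_eq_zero_of_ae (.of_forall fun θ => ?_)
  have hself : ∫ φ, residueKernel q (a ::ₘ s) (circlePt φ) (unitPt θ) = 0 :=
    integral_residueKernel_circlePt hq0 hq hs _
  have hinv : ∫ φ, residueKernel q (a ::ₘ s) (circlePt φ)⁻¹ (unitPt θ) = 0 :=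
    (integral_circlePt_inv fun z => residueKernel q (a ::ₘ s) z (unitPt θ)).trans hself
  have hcont : Continuous fun φ => residueKernel q (a ::ₘ s) (circlePt φ) (unitPt θ) :=
    continuous_residueKernel hq hs continuous_circlePt continuous_const (by simp) (by simp)
  have hcont' : Continuous fun φ => residueKernel q (a ::ₘ s) (circlePt φ)⁻¹ (unitPt θ) :=
    continuous_residueKernel hq hs (continuous_circlePt.inv₀ (by simp)) continuous_const
      (by simp) (by simp)
  simp only [boundaryTerm, unitPt_insertNth, Fin.insertNth_apply_same, Fin.removeNth_insertNth]
  rw [integral_mul_const, integral_add (integrable_of_continuous_of_compactSpace hcont)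
    (integrable_of_continuous_of_compactSpace hcont'), hself, hinv]
  simp

theorem integrable_gustafsonIntegrand (hq : ‖q‖ < 1) {s : Multiset ℂ} (hs : ∀ b ∈ s, ‖b‖ < 1)
    (n : ℕ) : Integrable fun θ : Fin n → UnitAddCircle => gustafsonIntegrand q s (unitPt θ) :=
  integrable_of_continuous_of_compactSpace
    (continuous_gustafsonIntegrand hq hs continuous_unitPt norm_unitPt)

theorem gustafsonIntegral_q_mul (hq0 : q ≠ 0) (hq : ‖q‖ < 1) {a : ℂ} {s : Multiset ℂ}
    (hs : ∀ b ∈ a ::ₘ s, ‖b‖ < 1) {n : ℕ} (hcard : s.card = 2 * n + 3) :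
    gustafsonIntegral q (n + 1) (a ::ₘ s) * (s.map fun b => 1 - a * b).prod =
      (1 - a * s.prod) * gustafsonIntegral q (n + 1) ((q * a) ::ₘ s) := by
  have hbdry (k) : Integrable fun θ : Fin (n + 1) → UnitAddCircle =>
      boundaryTerm q a s k (unitPt θ) :=
    integrable_of_continuous_of_compactSpace (continuous_boundaryTerm hq hs k)
  calc gustafsonIntegral q (n + 1) (a ::ₘ s) * (s.map fun b => 1 - a * b).prod
      = ∫ θ : Fin (n + 1) → UnitAddCircle,
          ((1 - a * s.prod) * gustafsonIntegrand q ((q * a) ::ₘ s) (unitPt θ) +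
            a * ∑ k, boundaryTerm q a s k (unitPt θ)) := by
        rw [gustafsonIntegral, ← integral_mul_const]
        refine integral_congr_ae ?_
        filter_upwards [ae_injective_unitPt (n + 1), ae_unitPt_mul_unitPt_ne_one (n + 1)]
          with θ hinj hne
        exact gustafsonIntegrand_mul_prod_one_sub hq hs hcard (norm_unitPt θ) hinj hne
    _ = (1 - a * s.prod) * gustafsonIntegral q (n + 1) ((q * a) ::ₘ s) := by
        rw [integral_add
          ((integrable_gustafsonIntegrand hq (norm_lt_one_of_mem_q_mul_cons hq hs) _).const_mul _)
          ((integrable_finsetSum _ fun k _ => hbdry k).const_mul _), integral_const_mul,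
          integral_const_mul, integral_finsetSum _ fun k _ => hbdry k]
        simp [integral_boundaryTerm hq0 hq hs, gustafsonIntegral]

end TypeCIntegral

section TypeCEvaluation

variable {q : ℂ}

theorem eq_apply_zero_of_apply_q_mul_eq {E : Type*} [TopologicalSpace E] [T2Space E]
    (hq : ‖q‖ < 1) {f : ℂ → E} {r : ℝ} (hf : ∀ a, ‖a‖ < r → f (q * a) = f a)
    (hcont : ContinuousAt f 0) {a : ℂ} (ha : ‖a‖ < r) : f a = f 0 := by
  have hlt (k : ℕ) : ‖q ^ k * a‖ < r := by
    rw [norm_mul, norm_pow]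
    exact (mul_le_of_le_one_left (norm_nonneg a) (pow_le_one₀ (norm_nonneg q) hq.le)).trans_lt ha
  have hconst (k : ℕ) : f (q ^ k * a) = f a := by
    induction k with
    | zero => simp
    | succ k ih => rw [pow_succ', mul_assoc, hf _ (hlt k), ih]
  have hlim : Tendsto (fun k : ℕ => q ^ k * a) atTop (𝓝 0) := by
    simpa using (tendsto_pow_atTop_nhds_zero_of_norm_lt_one hq).mul_const a
  exact tendsto_nhds_unique tendsto_const_nhds ((hcont.tendsto.comp hlim).congr hconst)

theorem norm_prod_cons_lt_one {a : ℂ} {s : Multiset ℂ} (hs : ∀ b ∈ a ::ₘ s, ‖b‖ < 1) :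
    ‖(a ::ₘ s).prod‖ < 1 := by
  induction s using Multiset.induction generalizing a with
  | empty => simpa using hs a
  | cons b s ih =>
    rw [Multiset.forall_mem_cons] at hs
    rw [Multiset.prod_cons, norm_mul]
    exact mul_lt_one_of_nonneg_of_lt_one_left (norm_nonneg a) hs.1 (ih hs.2).le

theorem gustafsonIntegrand_cons (a : ℂ) (s : Multiset ℂ) {n : ℕ} (x : Fin n → ℂ) :
    gustafsonIntegrand q (a ::ₘ s) x =
      gustafsonIntegrand q s x / ∏ i, ap q (a * x i) * ap q (a * (x i)⁻¹) := by
  simp only [gustafsonIntegrand, paramProd_cons]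
  rw [Finset.prod_mul_distrib, mul_comm (∏ i, _ * _), div_div]

theorem continuousOn_gustafsonIntegral_cons (hq : ‖q‖ < 1) {s : Multiset ℂ}
    (hs : ∀ b ∈ s, ‖b‖ < 1) (n : ℕ) :
    ContinuousOn (fun a => gustafsonIntegral q n (a ::ₘ s)) (Metric.ball 0 1) := by
  refine continuousOn_integral_of_compact_support isCompact_univ ?_ fun a θ _ h => absurd trivial h
  simp only [Function.uncurry_def, gustafsonIntegrand_cons]
  have hap := continuous_ap hq
  refine ContinuousOn.div ?_ ?_ fun p hp => Finset.prod_ne_zero_iff.2 fun i _ => ?_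
  · exact (continuous_gustafsonIntegrand hq hs (continuous_unitPt.comp continuous_snd)
      fun p i => norm_unitPt p.2 i).continuousOn
  · refine Continuous.continuousOn ?_
    fun_prop (disch := simp)
  · have ha : ‖p.1‖ < 1 := by simpa using hp.1
    exact mul_ne_zero (ap_ne_zero hq (by simpa using ha)) (ap_ne_zero hq (by simpa using ha))

theorem gustafsonIntegral_zero_cons (s : Multiset ℂ) (n : ℕ) :
    gustafsonIntegral q n (0 ::ₘ s) = gustafsonIntegral q n s := by
  simp only [gustafsonIntegral, gustafsonIntegrand, paramProd_zero_cons]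

theorem gustafsonIntegral_cons_mul_pairAp (hq0 : q ≠ 0) (hq : ‖q‖ < 1) {a : ℂ} {s : Multiset ℂ}
    (hs : ∀ b ∈ a ::ₘ s, ‖b‖ < 1) {n : ℕ} (hcard : s.card = 2 * n + 3) :
    gustafsonIntegral q (n + 1) (a ::ₘ s) * pairAp q (a ::ₘ s) =
      ap q (a ::ₘ s).prod * (gustafsonIntegral q (n + 1) s * pairAp q s) := by
  let f : ℂ → ℂ := fun a => gustafsonIntegral q (n + 1) (a ::ₘ s) *
    (s.map fun b => ap q (a * b)).prod / ap q (a * s.prod)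
  have hmem := Multiset.forall_mem_cons.1 hs
  have hcons {a : ℂ} (ha : ‖a‖ < 1) : ∀ b ∈ a ::ₘ s, ‖b‖ < 1 :=
    Multiset.forall_mem_cons.2 ⟨ha, hmem.2⟩
  have hprod {a : ℂ} (ha : ‖a‖ < 1) : ap q (a * s.prod) ≠ 0 := by
    simpa using ap_ne_zero hq (norm_prod_cons_lt_one (hcons ha))
  have hshift (a : ℂ) (ha : ‖a‖ < 1) : f (q * a) = f a := by
    have hmap : (s.map fun b => ap q (a * b)).prod =
        (s.map fun b => 1 - a * b).prod * (s.map fun b => ap q (q * a * b)).prod := by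
      simp only [← Multiset.prod_map_mul, mul_assoc, ap_eq_one_sub_mul hq (a * _)]
    have ha' := hprod ha
    simp only [f]
    rw [hmap, ← mul_assoc, gustafsonIntegral_q_mul hq0 hq (hcons ha) hcard]
    rw [ap_eq_one_sub_mul hq (a * s.prod)] at ha' ⊢
    rw [mul_assoc (1 - a * s.prod), mul_div_mul_left _ _ (left_ne_zero_of_mul ha'), mul_assoc q]
  have hcont : ContinuousAt f 0 := by
    have hap := continuous_ap hq
    refine ContinuousAt.div (.mul ?_ ?_) ?_ (by simp)
    · exact (continuousOn_gustafsonIntegral_cons hq hmem.2 _).continuousAt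
        (Metric.ball_mem_nhds 0 one_pos)
    · exact (continuous_multiset_prod _ fun b _ => by fun_prop).continuousAt
    · fun_prop
  have h : f a = f 0 := eq_apply_zero_of_apply_q_mul_eq hq hshift hcont hmem.1
  simp only [f, zero_mul, ap_zero, gustafsonIntegral_zero_cons, div_one, Multiset.map_const',
    Multiset.prod_replicate, one_pow, mul_one] at h
  rw [pairAp_cons, Multiset.prod_cons, ← mul_assoc, (div_eq_iff (hprod hmem.1)).1 h]
  ring

theorem gustafsonIntegral_replicate_zero_add (s : Multiset ℂ) (n m : ℕ) :
    gustafsonIntegral q n (Multiset.replicate m 0 + s) = gustafsonIntegral q n s := by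
  induction m with
  | zero => simp
  | succ m ih => rw [Multiset.replicate_succ, Multiset.cons_add, gustafsonIntegral_zero_cons, ih]

theorem pairAp_replicate_zero_add (s : Multiset ℂ) (m : ℕ) :
    pairAp q (Multiset.replicate m 0 + s) = pairAp q s := by
  induction m with
  | zero => simp
  | succ m ih => rw [Multiset.replicate_succ, Multiset.cons_add, pairAp_zero_cons, ih]

theorem gustafsonIntegral_mul_pairAp_of_card_le (hq0 : q ≠ 0) (hq : ‖q‖ < 1) {s : Multiset ℂ}
    (hs : ∀ b ∈ s, ‖b‖ < 1) {n : ℕ} (hcard : s.card ≤ 2 * n + 3) :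
    gustafsonIntegral q (n + 1) s * pairAp q s = gustafsonIntegral q (n + 1) 0 := by
  induction s using Multiset.induction with
  | empty => simp
  | cons a s ih =>
    rw [Multiset.card_cons] at hcard
    have hmem := Multiset.forall_mem_cons.1 hs
    obtain ⟨m, hm⟩ := Nat.exists_eq_add_of_lt hcard
    have key := gustafsonIntegral_cons_mul_pairAp hq0 hq (a := a)
      (s := Multiset.replicate (m + 1) 0 + s) (n := n)
      (by simpa [or_imp, forall_and, Multiset.mem_replicate] using hs) (by simp; omega)
    rw [← Multiset.add_cons, gustafsonIntegral_replicate_zero_add, pairAp_replicate_zero_add,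
      gustafsonIntegral_replicate_zero_add, pairAp_replicate_zero_add, ih hmem.2 (by omega)] at key
    simpa using key

theorem gustafsonIntegral_mul_pairAp (hq0 : q ≠ 0) (hq : ‖q‖ < 1) {s : Multiset ℂ}
    (hs : ∀ b ∈ s, ‖b‖ < 1) {n : ℕ} (hcard : s.card = 2 * n + 2) :
    gustafsonIntegral q n s * pairAp q s = ap q s.prod * gustafsonIntegral q n 0 := by
  cases n with
  | zero =>
    obtain ⟨a, b, rfl⟩ := Multiset.card_eq_two.1 hcard
    simp [gustafsonIntegral, gustafsonIntegrand, shortRootProd, longRootProd,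
      Multiset.insert_eq_cons, pairAp_cons, pairAp_singleton]
  | succ n =>
    obtain ⟨a, ha⟩ := Multiset.exists_mem_of_ne_zero (s := s) (by rintro rfl; simp at hcard)
    obtain ⟨u, rfl⟩ := Multiset.exists_cons_of_mem ha
    have hu : u.card = 2 * n + 3 := by simpa [mul_add] using hcard
    rw [gustafsonIntegral_cons_mul_pairAp hq0 hq hs hu,
      gustafsonIntegral_mul_pairAp_of_card_le hq0 hq (Multiset.forall_mem_cons.1 hs).2 hu.le]

theorem pairAp_ne_zero (hq : ‖q‖ < 1) {s : Multiset ℂ} (hs : ∀ b ∈ s, ‖b‖ < 1) :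
    pairAp q s ≠ 0 := by
  induction s using Multiset.induction with
  | empty => simp
  | cons a s ih =>
    rw [Multiset.forall_mem_cons] at hs
    rw [pairAp_cons]
    refine mul_ne_zero (Multiset.prod_ne_zero fun h => ?_) (ih hs.2)
    obtain ⟨b, hb, h⟩ := Multiset.mem_map.1 h
    refine ap_ne_zero hq ?_ h
    rw [norm_mul]
    exact mul_lt_one_of_nonneg_of_lt_one_left (norm_nonneg a) hs.1 (hs.2 b hb).le

theorem gustafsonIntegral_eq_div (hq0 : q ≠ 0) (hq : ‖q‖ < 1) {s : Multiset ℂ}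
    (hs : ∀ b ∈ s, ‖b‖ < 1) {n : ℕ} (hcard : s.card = 2 * n + 2) :
    gustafsonIntegral q n s = ap q s.prod * gustafsonIntegral q n 0 / pairAp q s :=
  (eq_div_iff (pairAp_ne_zero hq hs)).2 (gustafsonIntegral_mul_pairAp hq0 hq hs hcard)

end TypeCEvaluation

section Macdonald

variable {q : ℂ}

/-- Macdonald's weight for the root system `C_n`, with parameter `t` on the short and `v` on the
long roots. At `v = 1` it is the weight for `D_n`. -/
noncomputable def macdonaldIntegrand (q t v : ℂ) {n : ℕ} (x : Fin n → ℂ) : ℂ :=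
  shortRootProd (pochRatio q t) x * longRootProd (pochRatio q v) x

/-- The constant term of Macdonald's weight for the root system `C_n`. -/
noncomputable def macdonaldIntegral (q t v : ℂ) (n : ℕ) : ℂ :=
  ∫ θ : Fin n → UnitAddCircle, macdonaldIntegrand q t v (unitPt θ)

theorem macdonaldIntegrand_eq_div (t v : ℂ) {n : ℕ} (x : Fin n → ℂ) :
    macdonaldIntegrand q t v x = gustafsonIntegrand q 0 x /
      (shortRootProd (fun r => ap q (t * r)) x * longRootProd (fun r => ap q (v * r)) x) := by
  simp only [macdonaldIntegrand, gustafsonIntegrand, paramProd_zero, Finset.prod_const_one, div_one,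
    ← div_mul_div_comm, ← shortRootProd_div, ← longRootProd_div]
  rfl

theorem gustafsonIntegrand_add (s u : Multiset ℂ) {n : ℕ} (x : Fin n → ℂ) :
    gustafsonIntegrand q (s + u) x = gustafsonIntegrand q s x / ∏ i, paramProd q u (x i) := by
  simp only [gustafsonIntegrand, paramProd_add, Finset.prod_mul_distrib, div_div]

theorem gustafsonIntegrand_eq_div_prod (s : Multiset ℂ) {n : ℕ} (x : Fin n → ℂ) :
    gustafsonIntegrand q s x = gustafsonIntegrand q 0 x / ∏ i, paramProd q s (x i) := by
  simpa using gustafsonIntegrand_add 0 s x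

theorem gustafsonIntegrand_doubled_add_mul (c : ℂ) (s : Multiset ℂ) {m n : ℕ} (x : Fin m → ℂ)
    (y : Fin n → ℂ) :
    gustafsonIntegrand q (doubled c y + s) x * gustafsonIntegrand q 0 y =
      gustafsonIntegrand q (doubled c x) y * gustafsonIntegrand q s x := by
  have hcross : ∏ j, paramProd q (doubled c x) (y j) = ∏ i, paramProd q (doubled c y) (x i) := by
    simp only [paramProd_doubled]
    rw [Finset.prod_comm]
    simp only [signProd_comm]
  rw [add_comm, gustafsonIntegrand_add, gustafsonIntegrand_eq_div_prod (doubled c x), hcross]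
  ring

theorem prod_paramProd_fourParams {σ : ℂ} (hq : ‖q‖ < 1) (hσ : σ ^ 2 = q) (c : ℂ) {n : ℕ}
    (x : Fin n → ℂ) :
    ∏ i, paramProd q (fourParams σ c) (x i) = longRootProd (fun r => ap q (c ^ 2 * r)) x := by
  simp only [paramProd_fourParams hq hσ, longRootProd]

theorem norm_doubled_lt_one {c : ℂ} (hc : ‖c‖ < 1) {n : ℕ} {y : Fin n → ℂ}
    (hy : ∀ j, ‖y j‖ = 1) : ∀ b ∈ doubled c y, ‖b‖ < 1 := by
  simp only [doubled, Multiset.mem_sum, Finset.mem_univ, true_and]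
  rintro b ⟨j, hb⟩
  rcases (by simpa using hb : b = c * y j ∨ b = c * (y j)⁻¹) with rfl | rfl <;> simpa [hy] using hc

theorem norm_fourParams_lt_one {σ c : ℂ} (hσ : ‖σ‖ < 1) (hc : ‖c‖ < 1) :
    ∀ b ∈ fourParams σ c, ‖b‖ < 1 := by
  have h : ‖σ‖ * ‖c‖ < 1 := mul_lt_one_of_nonneg_of_lt_one_left (norm_nonneg σ) hσ hc.le
  simp [fourParams, hc, h]

theorem norm_lt_one_of_sq_eq {a b : ℂ} (h : a ^ 2 = b) (hb : ‖b‖ < 1) : ‖a‖ < 1 := by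
  rw [← h, norm_pow] at hb
  exact (pow_lt_one_iff_of_nonneg (norm_nonneg a) two_ne_zero).1 hb

theorem gustafsonIntegral_doubled_mul (hq0 : q ≠ 0) (hq : ‖q‖ < 1) {τ ρ σ : ℂ}
    (hτ : ‖τ‖ < 1) (hσ : σ ^ 2 = q) {n : ℕ} {x : Fin (n + 1) → ℂ} (hx : ∀ i, ‖x i‖ = 1) :
    gustafsonIntegral q n (doubled τ x) * gustafsonIntegrand q (fourParams σ ρ) x =
      ap q ((τ ^ 2) ^ (n + 1)) * gustafsonIntegral q n 0 / ap q (τ ^ 2) ^ (n + 1) *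
        macdonaldIntegrand q (τ ^ 2) (ρ ^ 2) x := by
  have hx0 (i) : x i ≠ 0 := norm_ne_zero_iff.1 (by simp [hx])
  have hpair : pairAp q (doubled τ x) =
      ap q (τ ^ 2) ^ (n + 1) * shortRootProd (fun r => ap q (τ ^ 2 * r)) x := by
    simpa using pairAp_doubled_add q τ hx0 0
  rw [gustafsonIntegral_eq_div hq0 hq (norm_doubled_lt_one hτ hx) (by rw [card_doubled]; ring),
    hpair, prod_doubled τ hx0, gustafsonIntegrand_eq_div_prod (fourParams σ ρ),
    prod_paramProd_fourParams hq hσ, macdonaldIntegrand_eq_div]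
  ring

theorem gustafsonIntegral_doubled_add_fourParams_mul (hq0 : q ≠ 0) (hq : ‖q‖ < 1) {τ ρ σ : ℂ}
    (hτ : ‖τ‖ < 1) (hρ : ‖ρ‖ < 1) (hσ : σ ^ 2 = q) {n : ℕ} {y : Fin n → ℂ}
    (hy : ∀ i, ‖y i‖ = 1) :
    gustafsonIntegral q (n + 1) (doubled τ y + fourParams σ ρ) * gustafsonIntegrand q 0 y =
      ap q (q * (τ ^ 2) ^ n * (ρ ^ 2) ^ 2) * gustafsonIntegral q (n + 1) 0 /
        (ap q (τ ^ 2) ^ n * fourPairAp q (ρ ^ 2)) *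
        macdonaldIntegrand q (τ ^ 2) (τ ^ 2 * ρ ^ 2) y := by
  have hy0 (j) : y j ≠ 0 := norm_ne_zero_iff.1 (by simp [hy])
  have hs : ∀ b ∈ doubled τ y + fourParams σ ρ, ‖b‖ < 1 := fun b hb =>
    (Multiset.mem_add.1 hb).elim (norm_doubled_lt_one hτ hy b)
      (norm_fourParams_lt_one (norm_lt_one_of_sq_eq hσ hq) hρ b)
  have hcard : (doubled τ y + fourParams σ ρ).card = 2 * (n + 1) + 2 := by
    simp [card_doubled, fourParams, mul_add]
  have hprod : (doubled τ y + fourParams σ ρ).prod = q * (τ ^ 2) ^ n * (ρ ^ 2) ^ 2 := by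
    rw [Multiset.prod_add, prod_doubled τ hy0, prod_fourParams hσ]
    ring
  rw [gustafsonIntegral_eq_div hq0 hq hs hcard, hprod, pairAp_doubled_add q τ hy0,
    map_mul_fourParams, prod_paramProd_fourParams hq hσ, pairAp_fourParams hq hσ hρ,
    macdonaldIntegrand_eq_div, mul_pow]
  ring

theorem continuous_gustafsonIntegrand_doubled_mul (hq : ‖q‖ < 1) {c : ℂ} (hc : ‖c‖ < 1)
    {s : Multiset ℂ} (hs : ∀ b ∈ s, ‖b‖ < 1) (m n : ℕ) :
    Continuous fun p : (Fin m → UnitAddCircle) × (Fin n → UnitAddCircle) =>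
      gustafsonIntegrand q (doubled c (unitPt p.1)) (unitPt p.2) *
        gustafsonIntegrand q s (unitPt p.1) := by
  have hx : Continuous fun p : (Fin m → UnitAddCircle) × (Fin n → UnitAddCircle) => unitPt p.1 :=
    by fun_prop
  have hy : Continuous fun p : (Fin m → UnitAddCircle) × (Fin n → UnitAddCircle) => unitPt p.2 :=
    by fun_prop
  have hap := continuous_ap hq
  refine .mul ?_ (continuous_gustafsonIntegrand hq hs hx fun p => norm_unitPt p.1)
  simp only [gustafsonIntegrand_eq_div_prod (doubled c _)]
  refine .div (continuous_gustafsonIntegrand hq (by simp) hy fun p => norm_unitPt p.2) ?_ fun p =>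
    Finset.prod_ne_zero_iff.2 fun j _ =>
      paramProd_ne_zero hq (norm_doubled_lt_one hc (norm_unitPt p.1)) (norm_unitPt p.2 j)
  simp only [paramProd_doubled]
  exact continuous_finsetProd _ fun j _ => continuous_finsetProd _ fun i _ =>
    continuous_signProd (by fun_prop) (by fun_prop) (by fun_prop)
      (fun p => unitPt_ne_zero p.1 i) fun p => unitPt_ne_zero p.2 j

theorem integral_gustafsonIntegral_doubled_mul (hq : ‖q‖ < 1) {c : ℂ} (hc : ‖c‖ < 1)
    {s : Multiset ℂ} (hs : ∀ b ∈ s, ‖b‖ < 1) (m n : ℕ) :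
    ∫ θ : Fin m → UnitAddCircle,
        gustafsonIntegral q n (doubled c (unitPt θ)) * gustafsonIntegrand q s (unitPt θ) =
      ∫ η : Fin n → UnitAddCircle,
        gustafsonIntegral q m (doubled c (unitPt η) + s) * gustafsonIntegrand q 0 (unitPt η) := by
  simp only [gustafsonIntegral, ← integral_mul_const, gustafsonIntegrand_doubled_add_mul]
  exact integral_integral_swap_of_hasCompactSupport
    (continuous_gustafsonIntegrand_doubled_mul hq hc hs m n) (HasCompactSupport.of_compactSpace _)

theorem macdonaldIntegral_succ (hq0 : q ≠ 0) (hq : ‖q‖ < 1) {t v : ℂ} (ht : ‖t‖ < 1)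
    (hv : ‖v‖ < 1) (n : ℕ) :
    ap q (t ^ (n + 1)) * gustafsonIntegral q n 0 / ap q t ^ (n + 1) *
        macdonaldIntegral q t v (n + 1) =
      ap q (q * t ^ n * v ^ 2) * gustafsonIntegral q (n + 1) 0 /
        (ap q t ^ n * fourPairAp q v) * macdonaldIntegral q t (t * v) n := by
  obtain ⟨τ, rfl⟩ := IsAlgClosed.exists_pow_nat_eq t two_pos
  obtain ⟨ρ, rfl⟩ := IsAlgClosed.exists_pow_nat_eq v two_pos
  obtain ⟨σ, hσ⟩ := IsAlgClosed.exists_pow_nat_eq q two_pos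
  have hτ := norm_lt_one_of_sq_eq rfl ht
  have hρ := norm_lt_one_of_sq_eq rfl hv
  have hfour := norm_fourParams_lt_one (norm_lt_one_of_sq_eq hσ hq) hρ
  have h := integral_gustafsonIntegral_doubled_mul hq hτ hfour (n + 1) n
  simp only [gustafsonIntegral_doubled_mul hq0 hq hτ hσ (norm_unitPt _),
    gustafsonIntegral_doubled_add_fourParams_mul hq0 hq hτ hρ hσ (norm_unitPt _),
    integral_const_mul] at h
  exact h

end Macdonald

section Limits

theorem norm_shortRootProd_le {f : ℂ → ℂ} {C : ℝ} (hf : ∀ r, ‖r‖ = 1 → ‖f r‖ ≤ C) {n : ℕ}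
    {x : Fin n → ℂ} (hx : ∀ i, ‖x i‖ = 1) :
    ‖shortRootProd f x‖ ≤ shortRootProd (fun _ => C) x := by
  have hC : 0 ≤ C := (norm_nonneg _).trans (hf 1 norm_one)
  simp only [shortRootProd, signProd, norm_prod, norm_mul]
  gcongr <;> exact hf _ (by simp [hx])

theorem norm_longRootProd_le {f : ℂ → ℂ} {C : ℝ} (hf : ∀ r, ‖r‖ = 1 → ‖f r‖ ≤ C) {n : ℕ}
    {x : Fin n → ℂ} (hx : ∀ i, ‖x i‖ = 1) :
    ‖longRootProd f x‖ ≤ longRootProd (fun _ => C) x := by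
  have hC : 0 ≤ C := (norm_nonneg _).trans (hf 1 norm_one)
  simp only [longRootProd, norm_prod, norm_mul]
  gcongr <;> exact hf _ (by simp [hx])

theorem norm_one_sub_le_of_mem_stolzSet {M : ℝ} {t r : ℂ} (ht : t ∈ Complex.stolzSet M)
    (hr : ‖r‖ = 1) : ‖1 - r‖ ≤ (1 + M) * ‖1 - t * r‖ := by
  have hM : 0 ≤ M := by
    nlinarith [ht.1, ht.2, norm_nonneg (1 - t)]
  have h1 : ‖1 - r‖ ≤ ‖1 - t * r‖ + ‖1 - t‖ := by
    calc ‖1 - r‖ = ‖1 - t * r - (1 - t) * r‖ := by ring_nf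
      _ ≤ ‖1 - t * r‖ + ‖(1 - t) * r‖ := norm_sub_le _ _
      _ = ‖1 - t * r‖ + ‖1 - t‖ := by rw [norm_mul, hr, mul_one]
  have h2 : 1 - ‖t‖ ≤ ‖1 - t * r‖ := by
    simpa [hr] using norm_sub_norm_le 1 (t * r)
  nlinarith [ht.2, mul_le_mul_of_nonneg_left h2 hM]

theorem exists_norm_pochRatio_le {ρ : ℝ} (hρ : ρ < 1) (M : ℝ) :
    ∃ C, ∀ q, ‖q‖ ≤ ρ → ∀ t ∈ Complex.stolzSet M, ∀ r, ‖r‖ = 1 → ‖pochRatio q t r‖ ≤ C := by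
  have hcont : ContinuousOn
      (fun p : ℂ × ℂ × ℂ => ap p.1 (p.1 * p.2.2) / ap p.1 (p.1 * (p.2.1 * p.2.2)))
      (Metric.closedBall 0 ρ ×ˢ Metric.closedBall 0 1 ×ˢ Metric.sphere 0 1) := by
    have hball {p : ℂ × ℂ × ℂ} (hp : p ∈ Metric.closedBall (0 : ℂ) ρ ×ˢ
        Metric.closedBall (0 : ℂ) 1 ×ˢ Metric.sphere (0 : ℂ) 1) : ‖p.1‖ < 1 :=
      (mem_closedBall_zero_iff.1 hp.1).trans_lt hρ
    refine .div (continuousOn_ap.comp (f := fun p : ℂ × ℂ × ℂ => (p.1, p.1 * p.2.2))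
      (by fun_prop) fun p hp => ⟨by simpa using hball hp, mem_univ _⟩)
      (continuousOn_ap.comp (f := fun p : ℂ × ℂ × ℂ => (p.1, p.1 * (p.2.1 * p.2.2)))
      (by fun_prop) fun p hp => ⟨by simpa using hball hp, mem_univ _⟩)
      fun p hp => ap_mul_self_ne_zero (hball hp) ?_
    obtain ⟨-, ht, hr⟩ := hp
    rw [norm_mul, mem_sphere_zero_iff_norm.1 hr, mul_one]
    exact mem_closedBall_zero_iff.1 ht
  obtain ⟨C, hC⟩ := ((isCompact_closedBall _ _).prod ((isCompact_closedBall _ _).prod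
    (isCompact_sphere _ _))).exists_bound_of_continuousOn hcont
  refine ⟨(1 + M) * C, fun q hq t ht r hr => ?_⟩
  have hq1 := hq.trans_lt hρ
  have hC := hC (q, t, r) ⟨by simpa using hq, by simpa using ht.1.le, by simpa using hr⟩
  have htr : 0 < ‖1 - t * r‖ := norm_pos_iff.2 <| sub_ne_zero.2 fun h =>
    ht.1.ne (by simpa [hr] using (congrArg norm h).symm)
  rw [pochRatio, ap_eq_one_sub_mul hq1 r, ap_eq_one_sub_mul hq1 (t * r), mul_div_mul_comm,
    norm_mul, norm_div]
  exact mul_le_mul ((div_le_iff₀ htr).2 (norm_one_sub_le_of_mem_stolzSet ht hr)) hC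
    (norm_nonneg _) ((by positivity : (0 : ℝ) ≤ ‖1 - r‖ / ‖1 - t * r‖).trans
      ((div_le_iff₀ htr).2 (norm_one_sub_le_of_mem_stolzSet ht hr)))

theorem measurable_pochRatio {q : ℂ} (hq : ‖q‖ < 1) (t : ℂ) : Measurable (pochRatio q t) := by
  have := (continuous_ap hq).measurable
  unfold pochRatio
  fun_prop

theorem measurable_shortRootProd {f : ℂ → ℂ} (hf : Measurable f) (n : ℕ) :
    Measurable (shortRootProd f : (Fin n → ℂ) → ℂ) := by
  unfold shortRootProd signProd
  fun_prop

theorem measurable_macdonaldIntegrand {q : ℂ} (hq : ‖q‖ < 1) (t v : ℂ) (n : ℕ) :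
    Measurable (macdonaldIntegrand q t v : (Fin n → ℂ) → ℂ) := by
  have := measurable_pochRatio hq
  refine (measurable_shortRootProd (this t) n).mul ?_
  unfold longRootProd
  fun_prop

variable {ι : Type*} {l : Filter ι} {q t v : ι → ℂ} {q₀ t₀ v₀ : ℂ} {M M' : ℝ}

theorem tendsto_ap (hq₀ : ‖q₀‖ < 1) (hq : Tendsto q l (𝓝 q₀)) (ht : Tendsto t l (𝓝 t₀)) :
    Tendsto (fun k => ap (q k) (t k)) l (𝓝 (ap q₀ t₀)) := by
  have hball : Metric.ball (0 : ℂ) 1 ×ˢ univ ∈ 𝓝 (q₀, t₀) :=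
    prod_mem_nhds (Metric.isOpen_ball.mem_nhds (by simpa using hq₀)) univ_mem
  simpa only [Function.comp_def] using
    (continuousOn_ap.continuousAt hball).tendsto.comp (hq.prodMk_nhds ht)

theorem tendsto_pochRatio [l.NeBot] (hq₀ : ‖q₀‖ < 1) (hq : Tendsto q l (𝓝 q₀))
    (ht : Tendsto t l (𝓝[Complex.stolzSet M] t₀)) {r : ℂ} (hr : ‖r‖ = 1) (hr1 : r ≠ 1) :
    Tendsto (fun k => pochRatio (q k) (t k) r) l (𝓝 (pochRatio q₀ t₀ r)) := by
  obtain ⟨ht, hmem⟩ := tendsto_nhdsWithin_iff.1 ht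
  have ht₀ : ‖t₀ * r‖ ≤ 1 := by
    rw [norm_mul, hr, mul_one]
    exact le_of_tendsto ht.norm (hmem.mono fun k hk => hk.1.le)
  have hle : ‖1 - r‖ ≤ (1 + M) * ‖1 - t₀ * r‖ :=
    ge_of_tendsto ((tendsto_const_nhds.sub (ht.mul_const r)).norm.const_mul _)
      (hmem.mono fun k hk => norm_one_sub_le_of_mem_stolzSet hk hr)
  have hne : 1 - t₀ * r ≠ 0 := fun h => hr1 <| by
    rw [h, norm_zero, mul_zero, norm_le_zero_iff, sub_eq_zero] at hle
    exact hle.symm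
  refine (tendsto_ap hq₀ hq tendsto_const_nhds).div (tendsto_ap hq₀ hq (ht.mul_const r)) ?_
  rw [ap_eq_one_sub_mul hq₀]
  exact mul_ne_zero hne (ap_mul_self_ne_zero hq₀ ht₀)

theorem tendsto_macdonaldIntegral [l.NeBot] [l.IsCountablyGenerated] (hq₀ : ‖q₀‖ < 1)
    (hq : Tendsto q l (𝓝 q₀)) (ht : Tendsto t l (𝓝[Complex.stolzSet M] t₀))
    (hv : Tendsto v l (𝓝[Complex.stolzSet M'] v₀)) (n : ℕ) :
    Tendsto (fun k => macdonaldIntegral (q k) (t k) (v k) n) l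
      (𝓝 (macdonaldIntegral q₀ t₀ v₀ n)) := by
  obtain ⟨ρ, hρ₀, hρ⟩ := exists_between hq₀
  have hqρ : ∀ᶠ k in l, ‖q k‖ ≤ ρ := hq.norm.eventually_le_const hρ₀
  obtain ⟨C, hC⟩ := exists_norm_pochRatio_le hρ M
  obtain ⟨C', hC'⟩ := exists_norm_pochRatio_le hρ M'
  refine tendsto_integral_filter_of_dominated_convergence
    (fun _ =>
      shortRootProd (fun _ => C) (0 : Fin n → ℂ) * longRootProd (fun _ => C') (0 : Fin n → ℂ))
    (hqρ.mono fun k hk => ((measurable_macdonaldIntegrand (hk.trans_lt hρ) _ _ n).comp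
      continuous_unitPt.measurable).aestronglyMeasurable) ?_ (integrable_const _) ?_
  · filter_upwards [hqρ, (tendsto_nhdsWithin_iff.1 ht).2, (tendsto_nhdsWithin_iff.1 hv).2]
      with k hqk htk hvk
    refine .of_forall fun θ => ?_
    have hshort := norm_shortRootProd_le (hC _ hqk _ htk) (norm_unitPt θ)
    exact (norm_mul_le _ _).trans (mul_le_mul hshort
      (norm_longRootProd_le (hC' _ hqk _ hvk) (norm_unitPt θ)) (norm_nonneg _)
      ((norm_nonneg _).trans hshort))
  · filter_upwards [ae_injective_unitPt n, ae_unitPt_mul_unitPt_ne_one n] with θ hinj hmul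
    have hshort {r : ℂ} (hr : ‖r‖ = 1) (hr1 : r ≠ 1) := tendsto_pochRatio hq₀ hq ht hr hr1
    have hlong {r : ℂ} (hr : ‖r‖ = 1) (hr1 : r ≠ 1) := tendsto_pochRatio hq₀ hq hv hr hr1
    have hdiv {i j : Fin n} (hij : i ≠ j) : unitPt θ i * (unitPt θ j)⁻¹ ≠ 1 := by
      rw [Ne, mul_inv_eq_one₀ (unitPt_ne_zero θ j)]
      exact hinj.ne hij
    refine .mul (tendsto_finsetProd _ fun i _ => tendsto_finsetProd _ fun j hj => ?_)
      (tendsto_finsetProd _ fun i _ => ?_)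
    · have hij : i ≠ j := (Finset.mem_filter.1 hj).2.ne
      exact (((hshort (by simp) (hmul i j)).mul (hshort (by simp) (hdiv hij))).mul
        (hshort (by simp) (by rw [mul_comm]; exact hdiv hij.symm))).mul
        (hshort (by simp) (inv_ne_one.2 (hmul i j)))
    · have hi : unitPt θ i ^ 2 ≠ 1 := by rw [sq]; exact hmul i i
      exact (hlong (by simp) hi).mul
        (hlong (by simp) (by rw [inv_pow]; exact inv_ne_one.2 hi))

end Limits

section Evaluation

theorem shortRootProd_congr_of_ne_one {M : Type*} [CommMonoid M] {f g : ℂ → M}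
    (hfg : ∀ r, ‖r‖ = 1 → r ≠ 1 → f r = g r) {n : ℕ} {x : Fin n → ℂ} (hx : ∀ i, ‖x i‖ = 1)
    (hinj : Function.Injective x) (hmul : ∀ i j, x i * x j ≠ 1) :
    shortRootProd f x = shortRootProd g x := by
  have hdiv {i j : Fin n} (hij : i ≠ j) : x i * (x j)⁻¹ ≠ 1 := by
    rw [Ne, mul_inv_eq_one₀ (norm_ne_zero_iff.1 (by simp [hx]))]
    exact hinj.ne hij
  refine Finset.prod_congr rfl fun i _ => Finset.prod_congr rfl fun j hj => ?_
  have hij : i ≠ j := (Finset.mem_filter.1 hj).2.ne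
  rw [signProd, hfg _ (by simp [hx]) (hmul i j), hfg _ (by simp [hx]) (hdiv hij),
    hfg (_⁻¹ * _) (by simp [hx]) (by rw [mul_comm]; exact hdiv hij.symm),
    hfg _ (by simp [hx]) (inv_ne_one.2 (hmul i j)), signProd]

variable {q t : ℂ}

theorem pochRatio_one (hq : ‖q‖ < 1) {r : ℂ} (hr : ‖r‖ = 1) (hr1 : r ≠ 1) :
    pochRatio q 1 r = 1 := by
  rw [pochRatio, one_mul, ap_eq_one_sub_mul hq]
  exact div_self (mul_ne_zero (sub_ne_zero.2 hr1.symm) (ap_mul_self_ne_zero hq hr.le))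

theorem macdonaldIntegral_zero (q t v : ℂ) : macdonaldIntegral q t v 0 = 1 := by
  simp [macdonaldIntegral, macdonaldIntegrand, shortRootProd, longRootProd]

theorem macdonaldIntegral_one_right (hq : ‖q‖ < 1) (t : ℂ) (n : ℕ) :
    macdonaldIntegral q t 1 n =
      ∫ θ : Fin n → UnitAddCircle, shortRootProd (pochRatio q t) (unitPt θ) := by
  refine integral_congr_ae ?_
  filter_upwards [ae_unitPt_mul_unitPt_ne_one n] with θ hmul
  have hsq (i) : unitPt θ i ^ 2 ≠ 1 := by rw [sq]; exact hmul i i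
  have hlong (i) : pochRatio q 1 (unitPt θ i ^ 2) * pochRatio q 1 ((unitPt θ i)⁻¹ ^ 2) = 1 := by
    rw [pochRatio_one hq (by simp) (hsq i),
      pochRatio_one hq (by simp) (by rw [inv_pow]; exact inv_ne_one.2 (hsq i)), one_mul]
  simp only [macdonaldIntegrand, longRootProd, hlong, Finset.prod_const_one, mul_one]

theorem macdonaldIntegral_one_one (hq : ‖q‖ < 1) (n : ℕ) : macdonaldIntegral q 1 1 n = 1 := by
  have h : ∀ᵐ θ : Fin n → UnitAddCircle, shortRootProd (pochRatio q 1) (unitPt θ) = 1 := by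
    filter_upwards [ae_injective_unitPt n, ae_unitPt_mul_unitPt_ne_one n] with θ hinj hmul
    rw [shortRootProd_congr_of_ne_one (g := fun _ => 1) (fun r => pochRatio_one hq)
      (norm_unitPt θ) hinj hmul]
    simp [shortRootProd, signProd]
  rw [macdonaldIntegral_one_right hq, integral_congr_ae h]
  simp

theorem tendsto_ofReal_stolzSet : Tendsto Complex.ofReal (𝓝[<] 1) (𝓝[Complex.stolzSet 2] 1) :=
  Complex.nhdsWithin_lt_le_nhdsWithin_stolzSet one_lt_two

theorem exists_mem_stolzSet {z : ℂ} (hz : ‖z‖ < 1) : ∃ M, z ∈ Complex.stolzSet M := by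
  obtain ⟨M, hM⟩ := exists_gt (‖1 - z‖ / (1 - ‖z‖))
  exact ⟨M, hz, (div_lt_iff₀ (sub_pos.2 hz)).1 hM⟩

theorem tendsto_ap_pow_div_ap (hq : ‖q‖ < 1) (n : ℕ) :
    Tendsto (fun u => ap q (u ^ n) / ap q u) (𝓝[≠] 1) (𝓝 n) := by
  have hap := continuous_ap hq
  have hne : ap q (q * 1) ≠ 0 := ap_mul_self_ne_zero hq norm_one.le
  have h : ContinuousAt
      (fun u => (∑ i ∈ Finset.range n, u ^ i) * (ap q (q * u ^ n) / ap q (q * u))) 1 :=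
    ContinuousAt.mul (by fun_prop) (ContinuousAt.div (by fun_prop) (by fun_prop) hne)
  have h1 := h.tendsto.mono_left (nhdsWithin_le_nhds (s := {1}ᶜ))
  simp only [one_pow, Finset.sum_const, Finset.card_range, nsmul_eq_mul, mul_one,
    div_self (mul_one q ▸ hne)] at h1
  refine h1.congr' (eventually_mem_nhdsWithin.mono fun u hu => ?_)
  beta_reduce
  rw [geom_sum_eq hu, ap_eq_one_sub_mul hq (u ^ n), ap_eq_one_sub_mul hq u, mul_div_mul_comm,
    ← neg_sub (u ^ n), ← neg_sub u, neg_div_neg_eq]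

theorem tendsto_fourPairAp {ι : Type*} {l : Filter ι} {q v : ι → ℂ} {q₀ v₀ : ℂ} (hq₀ : ‖q₀‖ < 1)
    (hv₀ : ‖v₀‖ ≤ 1) (hq : Tendsto q l (𝓝 q₀)) (hv : Tendsto v l (𝓝 v₀)) :
    Tendsto (fun k => fourPairAp (q k) (v k)) l (𝓝 (fourPairAp q₀ v₀)) :=
  (hv.const_add 1).mul (((tendsto_ap hq₀ hq (hq.mul (hv.pow 2))).div
    (tendsto_ap hq₀ hq (hq.mul hv)) (ap_mul_self_ne_zero hq₀ hv₀)).pow 2)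

theorem fourPairAp_one (hq : ‖q‖ < 1) : fourPairAp q 1 = 2 := by
  have h : ap q (q * 1) ≠ 0 := ap_mul_self_ne_zero hq norm_one.le
  rw [fourPairAp, one_pow, div_self h]
  norm_num

theorem ap_pow_succ_ne_zero (hq : ‖q‖ < 1) (ht : ‖t‖ < 1) (n : ℕ) : ap q (t ^ (n + 1)) ≠ 0 :=
  ap_ne_zero hq (by rw [norm_pow]; exact pow_lt_one₀ (norm_nonneg t) ht n.succ_ne_zero)

theorem fourPairAp_pow_ne_zero (hq : ‖q‖ < 1) (ht : ‖t‖ < 1) (n : ℕ) :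
    fourPairAp q (t ^ n) ≠ 0 := by
  cases n with
  | zero => rw [pow_zero, fourPairAp_one hq]; exact two_ne_zero
  | succ n =>
    refine fourPairAp_ne_zero hq ?_
    rw [norm_pow]
    exact pow_lt_one₀ (norm_nonneg t) ht n.succ_ne_zero

theorem gustafsonIntegral_succ_zero (hq0 : q ≠ 0) (hq : ‖q‖ < 1) (n : ℕ) :
    gustafsonIntegral q (n + 1) 0 = 2 * (n + 1) / ap q q * gustafsonIntegral q n 0 := by
  have hu := tendsto_ofReal_stolzSet
  have hu1 := tendsto_nhds_of_tendsto_nhdsWithin hu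
  have hIco : ∀ᶠ u : ℝ in 𝓝[<] 1, u ∈ Ico (0 : ℝ) 1 := Ico_mem_nhdsLT one_pos
  have hune : Tendsto Complex.ofReal (𝓝[<] 1) (𝓝[≠] 1) :=
    tendsto_nhdsWithin_iff.2 ⟨hu1, hIco.mono fun u hu => Complex.ofReal_ne_one.2 hu.2.ne⟩
  have hu2 : Tendsto (fun u : ℝ => (u * u : ℂ)) (𝓝[<] 1) (𝓝[Complex.stolzSet 2] 1) := by
    simp only [← Complex.ofReal_mul]
    refine hu.comp (tendsto_nhdsWithin_iff.2 ⟨?_, hIco.mono fun u hu =>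
      mul_lt_one_of_nonneg_of_lt_one_left hu.1 hu.2 hu.2.le⟩)
    exact tendsto_nhdsWithin_of_tendsto_nhds
      ((continuous_id.mul continuous_id).tendsto' (1 : ℝ) 1 (one_mul 1))
  have hq' : Tendsto (fun _ : ℝ => q) (𝓝[<] 1) (𝓝 q) := tendsto_const_nhds
  have hleft := (((tendsto_ap_pow_div_ap hq (n + 1)).comp hune).mul_const
    (gustafsonIntegral q n 0)).mul (tendsto_macdonaldIntegral hq hq' hu hu (n + 1))
  have hright := (((tendsto_ap hq hq' ((hu1.pow n).const_mul q |>.mul (hu1.pow 2))).mul_const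
    (gustafsonIntegral q (n + 1) 0)).div (tendsto_fourPairAp hq norm_one.le hq' hu1)
    (by rw [fourPairAp_one hq]; exact two_ne_zero)).mul
    (tendsto_macdonaldIntegral hq hq' hu hu2 n)
  have h := tendsto_nhds_unique_of_eventuallyEq hleft hright ?_
  · simp only [macdonaldIntegral_one_one hq, fourPairAp_one hq, one_pow, mul_one] at h
    push_cast at h
    field_simp [ap_ne_zero hq hq] at h ⊢
    linear_combination -h
  · filter_upwards [hIco] with u hu
    have hu1 : ‖(u : ℂ)‖ < 1 := by simpa [abs_of_nonneg hu.1] using hu.2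
    have hap := ap_ne_zero hq hu1
    have hfour := fourPairAp_ne_zero hq hu1
    have hsucc := macdonaldIntegral_succ hq0 hq hu1 hu1 n
    simp only [Function.comp_apply, Pi.div_apply]
    rw [pow_succ (ap q u)] at hsucc
    field_simp at hsucc ⊢
    linear_combination hsucc

theorem gustafsonIntegral_zero (hq0 : q ≠ 0) (hq : ‖q‖ < 1) (n : ℕ) :
    gustafsonIntegral q n 0 = n.factorial * (2 / ap q q) ^ n := by
  induction n with
  | zero => simp [gustafsonIntegral, gustafsonIntegrand, shortRootProd, longRootProd]
  | succ n ih =>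
    rw [gustafsonIntegral_succ_zero hq0 hq, ih, Nat.factorial_succ]
    push_cast
    ring

theorem macdonaldIntegral_succ_eq (hq0 : q ≠ 0) (hq : ‖q‖ < 1) (ht : ‖t‖ < 1) {v : ℂ}
    (hv : ‖v‖ < 1) (n : ℕ) :
    macdonaldIntegral q t v (n + 1) =
      (n + 1) * (2 * ap q t / ap q q) *
        (ap q (q * t ^ n * v ^ 2) / (ap q (t ^ (n + 1)) * fourPairAp q v)) *
        macdonaldIntegral q t (t * v) n := by
  have h := macdonaldIntegral_succ hq0 hq ht hv n
  have hκ : gustafsonIntegral q n 0 ≠ 0 := by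
    rw [gustafsonIntegral_zero hq0 hq]
    exact mul_ne_zero (Nat.cast_ne_zero.2 n.factorial_ne_zero)
      (pow_ne_zero n (div_ne_zero two_ne_zero (ap_ne_zero hq hq)))
  have htn := ap_pow_succ_ne_zero hq ht n
  have hv4 := fourPairAp_ne_zero hq hv
  have hat := ap_ne_zero hq ht
  have haq := ap_ne_zero hq hq
  rw [gustafsonIntegral_succ_zero hq0 hq, pow_succ (ap q t)] at h
  field_simp at h ⊢
  linear_combination h

theorem prod_range_comp_add_two {M : Type*} [CommMonoid M] (f : ℕ → M) (n : ℕ) :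
    f n * ∏ m ∈ Finset.range (n + 2), f (n + 1 + m) =
      (∏ m ∈ Finset.range (n + 1), f (n + m)) * (f (2 * n + 1) * f (2 * n + 2)) := by
  have h := Finset.prod_range_succ' (fun m => f (n + m)) (n + 2)
  rw [Finset.prod_range_succ, Finset.prod_range_succ, mul_assoc] at h
  simp only [add_zero, ← add_assoc, ← two_mul] at h
  simp only [h, mul_comm (f n), add_right_comm n 1]

theorem macdonaldIntegral_eq (hq0 : q ≠ 0) (hq : ‖q‖ < 1) (ht : ‖t‖ < 1) {v : ℂ}
    (hv : ‖v‖ < 1) (n : ℕ) :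
    macdonaldIntegral q t v (n + 1) =
      (n + 1).factorial * (2 * ap q t / ap q q) ^ (n + 1) *
        ((∏ m ∈ Finset.range (n + 1), ap q (q * t ^ (n + m) * v ^ 2)) /
          ∏ m ∈ Finset.range (n + 1), ap q (t ^ (m + 1)) * fourPairAp q (t ^ m * v)) := by
  induction n generalizing v with
  | zero => simp [macdonaldIntegral_succ_eq hq0 hq ht hv, macdonaldIntegral_zero]
  | succ n ih =>
    have htv : ‖t * v‖ < 1 := by
      rw [norm_mul]
      exact mul_lt_one_of_nonneg_of_lt_one_left (norm_nonneg t) ht hv.le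
    have hnum : ∏ m ∈ Finset.range (n + 1 + 1), ap q (q * t ^ (n + 1 + m) * v ^ 2) =
        (∏ m ∈ Finset.range (n + 1), ap q (q * t ^ (n + m) * (t * v) ^ 2)) *
          ap q (q * t ^ (n + 1) * v ^ 2) := by
      rw [Finset.prod_range_succ', add_zero]
      congr! 3
      ring
    have hfour : ∏ m ∈ Finset.range (n + 1 + 1), fourPairAp q (t ^ m * v) =
        (∏ m ∈ Finset.range (n + 1), fourPairAp q (t ^ m * (t * v))) * fourPairAp q v := by
      rw [Finset.prod_range_succ', pow_zero, one_mul]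
      congr! 3
      ring
    rw [macdonaldIntegral_succ_eq hq0 hq ht hv, ih htv, hnum, Finset.prod_mul_distrib,
      Finset.prod_mul_distrib, hfour, Finset.prod_range_succ _ (n + 1), (n + 1).factorial_succ]
    push_cast
    ring

theorem fourPairAp_eq_div (hq : ‖q‖ < 1) {v : ℂ} (hv : ‖v‖ < 1) :
    fourPairAp q v = ap q (v ^ 2) * ap q (q * v ^ 2) / (ap q v * ap q (q * v)) := by
  have hv1 : 1 - v ≠ 0 := sub_ne_zero.2 fun h => by simp [← h] at hv
  rw [fourPairAp, ap_eq_one_sub_mul hq v, ap_eq_one_sub_mul hq (v ^ 2)]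
  field_simp
  ring

theorem prod_div_prod_fourPairAp_pow (hq : ‖q‖ < 1) (ht : ‖t‖ < 1) (n : ℕ) :
    (∏ m ∈ Finset.range (n + 1), ap q (q * t ^ (n + m))) /
        (∏ m ∈ Finset.range (n + 1), ap q (t ^ (m + 1)) * fourPairAp q (t ^ m)) =
      ap q (q * t ^ n) / ap q (t ^ (n + 1)) *
        (∏ j ∈ Finset.range n, ap q (q * t ^ (2 * j + 1)) / ap q (t ^ (2 * j + 2))) / 2 := by
  have hap := ap_pow_succ_ne_zero hq ht
  have hqap (m : ℕ) : ap q (q * t ^ m) ≠ 0 := ap_mul_self_ne_zero hq (by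
    rw [norm_pow]; exact pow_le_one₀ (norm_nonneg t) ht.le)
  induction n with
  | zero => simp [fourPairAp_one hq, div_div]
  | succ n ih =>
    have htn : ‖t ^ (n + 1)‖ < 1 := by
      rw [norm_pow]
      exact pow_lt_one₀ (norm_nonneg t) ht n.succ_ne_zero
    have hnum := prod_range_comp_add_two (fun m => ap q (q * t ^ m)) n
    rw [mul_comm, ← eq_div_iff (hqap n), mul_div_assoc] at hnum
    rw [hnum, Finset.prod_range_succ (fun m => ap q (t ^ (m + 1)) * fourPairAp q (t ^ m)) (n + 1),
      Finset.prod_range_succ (fun j => ap q (q * t ^ (2 * j + 1)) / ap q (t ^ (2 * j + 2))) n,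
      fourPairAp_eq_div hq htn, ← pow_mul, show (n + 1) * 2 = 2 * n + 2 by ring,
      mul_div_mul_comm, ih]
    field_simp [hap n, hap (n + 1), hap (2 * n + 1), hqap n, hqap (n + 1), hqap (2 * n + 2)]

theorem macdonaldIntegral_one_right_eq (hq : ‖q‖ < 1) (ht : ‖t‖ < 1) (n : ℕ) :
    macdonaldIntegral q t 1 (n + 1) =
      2 ^ n * (n + 1).factorial * (ap q t / ap q q) ^ (n + 1) *
        (ap q (q * t ^ n) / ap q (t ^ (n + 1)) *
          ∏ j ∈ Finset.range n, ap q (q * t ^ (2 * j + 1)) / ap q (t ^ (2 * j + 2))) := by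
  -- Letting `q` vary through nonzero values together with `v → 1` also covers `q = 0`.
  let l : Filter (ℂ × ℝ) := 𝓝[{0}ᶜ] q ×ˢ 𝓝[<] 1
  have : (𝓝[{0}ᶜ] q).NeBot := mem_closure_iff_nhdsWithin_neBot.1 (dense_compl_singleton 0 q)
  have hqk : Tendsto Prod.fst l (𝓝 q) := tendsto_fst.mono_right nhdsWithin_le_nhds
  have hvk : Tendsto (fun k : ℂ × ℝ => (k.2 : ℂ)) l (𝓝[Complex.stolzSet 2] 1) :=
    tendsto_ofReal_stolzSet.comp tendsto_snd
  have hvk1 := tendsto_nhds_of_tendsto_nhdsWithin hvk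
  obtain ⟨M, hM⟩ := exists_mem_stolzSet ht
  have htk : Tendsto (fun _ : ℂ × ℝ => t) l (𝓝[Complex.stolzSet M] t) :=
    tendsto_nhdsWithin_iff.2 ⟨tendsto_const_nhds, Eventually.of_forall fun _ => hM⟩
  have htm (m : ℕ) : ‖t ^ m‖ ≤ 1 := by rw [norm_pow]; exact pow_le_one₀ (norm_nonneg t) ht.le
  have hnum := tendsto_finsetProd (Finset.range (n + 1)) fun m _ =>
    tendsto_ap hq hqk ((hqk.mul_const (t ^ (n + m))).mul (hvk1.pow 2))
  have hden := tendsto_finsetProd (Finset.range (n + 1)) fun m _ =>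
    (tendsto_ap hq hqk (tendsto_const_nhds (x := t ^ (m + 1)))).mul (tendsto_fourPairAp hq
      (by simpa using htm m) hqk (hvk1.const_mul (t ^ m)))
  have hpre := (((tendsto_ap hq hqk (tendsto_const_nhds (x := t))).const_mul 2).div
    (tendsto_ap hq hqk hqk) (ap_ne_zero hq hq)).pow (n + 1) |>.const_mul ((n + 1).factorial : ℂ)
  have hright := hpre.mul (hnum.div hden (Finset.prod_ne_zero_iff.2 fun m _ =>
    mul_ne_zero (ap_pow_succ_ne_zero hq ht m) (by
      rw [mul_one]; exact fourPairAp_pow_ne_zero hq ht m)))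
  have h := tendsto_nhds_unique_of_eventuallyEq
    (tendsto_macdonaldIntegral hq hqk htk hvk (n + 1)) hright ?_
  · simp only [one_pow, mul_one] at h
    rw [h, prod_div_prod_fourPairAp_pow hq ht]
    ring
  · have hq0 : ∀ᶠ k in l, k.1 ≠ 0 := tendsto_fst.eventually eventually_mem_nhdsWithin
    have hv : ∀ᶠ k in l, (k.2 : ℂ) ∈ Complex.stolzSet 2 := hvk.eventually eventually_mem_nhdsWithin
    filter_upwards [hq0, hqk.norm.eventually_lt_const hq, hv] with k hk0 hk hv
    exact macdonaldIntegral_eq hk0 hk ht hv.1 n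

end Evaluation

open scoped Pointwise in
theorem integral_torusPt {E : Type*} [NormedAddCommGroup E] [NormedSpace ℝ E] {n : ℕ}
    {F : (Fin n → ℂ) → E} (hF : StronglyMeasurable F) :
    ∫ θ in univ.pi fun _ => Ioc (0 : ℝ) (2 * Real.pi), F (torusPt θ) =
      (2 * Real.pi) ^ n • ∫ θ : Fin n → UnitAddCircle, F (unitPt θ) := by
  have hbox : (univ.pi fun _ : Fin n => Ioc (0 : ℝ) (2 * Real.pi)) =
      (2 * Real.pi) • univ.pi fun _ => Ioc (0 : ℝ) 1 := by
    rw [smul_set_univ_pi]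
    simp [Pi.smul_def, LinearOrderedField.smul_Ioc Real.two_pi_pos]
  have hcoe (θ : Fin n → ℝ) : unitPt (fun i => (θ i : UnitAddCircle)) =
      torusPt ((2 * Real.pi) • θ) := by
    ext i
    simp [torusPt, unitPt, circlePt_coe]
  have hmk : MeasurePreserving (fun (θ : Fin n → ℝ) i => (θ i : UnitAddCircle))
      (volume.restrict (univ.pi fun _ => Ioc 0 1)) volume := by
    have h := measurePreserving_pi (fun _ : Fin n => volume.restrict (Ioc (0 : ℝ) (0 + 1)))
      (fun _ => volume) fun _ => UnitAddCircle.measurePreserving_mk 0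
    rwa [zero_add, ← Measure.restrict_pi_pi] at h
  have hscale := Measure.setIntegral_comp_smul_of_pos volume (fun θ => F (torusPt θ))
    (univ.pi fun _ : Fin n => Ioc (0 : ℝ) 1) Real.two_pi_pos
  simp only [← hcoe, ← hbox, Module.finrank_fin_fun] at hscale
  have hF' : StronglyMeasurable fun θ : Fin n → UnitAddCircle => F (unitPt θ) :=
    hF.comp_measurable continuous_unitPt.measurable
  rw [← hmk.map_eq, integral_map hmk.measurable.aemeasurable hF'.aestronglyMeasurable, hscale,
    smul_inv_smul₀ (pow_ne_zero n Real.two_pi_pos.ne')]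

/-- the multivariable Askey–Wilson (q-Selberg) integral evaluation for the
`D_N` weight:
`((q;q)_∞^N/(t;q)_∞^N) (1/(2^{N−1} N!)) ∮_{T^N} ∏_{i<j} (x_i^{±1}x_j^{±1};q)_∞/(t x_i^{±1}x_j^{±1};q)_∞ ∏_j dx_j/(2πi x_j)
 = ((q t^{N−1};q)_∞/(t^N;q)_∞) ∏_{j=0}^{N−2} (q t^{2j+1};q)_∞/(t^{2j+2};q)_∞`. -/
theorem gustafson_DN (N : ℕ) (hN : 0 < N) (q t : ℂ) (hq : ‖q‖ < 1) (ht : ‖t‖ < 1) :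
    ((ap q q) ^ N / (ap q t) ^ N) * (1 / (2 ^ (N - 1) * (N.factorial : ℂ))) *
      (1 / (2 * (Real.pi : ℂ)) ^ N) *
      ∫ θ in Set.univ.pi (fun _ : Fin N => Set.Ioc (0 : ℝ) (2 * Real.pi)),
        ∏ i : Fin N, ∏ j ∈ Finset.univ.filter (fun j => i < j),
          pochRatio q t (torusPt θ i * torusPt θ j) *
            pochRatio q t (torusPt θ i * (torusPt θ j)⁻¹) *
            pochRatio q t ((torusPt θ i)⁻¹ * torusPt θ j) *
            pochRatio q t ((torusPt θ i * torusPt θ j)⁻¹) =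
      (ap q (q * t ^ (N - 1)) / ap q (t ^ N)) *
        ∏ j ∈ Finset.range (N - 1), ap q (q * t ^ (2 * j + 1)) / ap q (t ^ (2 * j + 2)) := by
  obtain ⟨n, rfl⟩ := Nat.exists_eq_add_one.2 hN
  have htorus := integral_torusPt
    (measurable_shortRootProd (measurable_pochRatio hq t) (n + 1)).stronglyMeasurable
  rw [← macdonaldIntegral_one_right hq, macdonaldIntegral_one_right_eq hq ht] at htorus
  simp only [shortRootProd, signProd] at htorus
  have hfac : ((n + 1).factorial : ℂ) ≠ 0 := Nat.cast_ne_zero.2 (n + 1).factorial_ne_zero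
  have haq := ap_ne_zero hq hq
  have hat := ap_ne_zero hq ht
  rw [htorus, Nat.add_sub_cancel, Complex.real_smul, div_pow]
  push_cast
  field_simp
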